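/- Polarization set sizes: for a discrete memoryless source polarization with β ∈ (0,1/2) and δ_N = 2^{−N^β}, lim_{N→∞} |ℋ_X|/N = H(X), lim_{N→∞} |ℒ_X|/N = 1 − H(X), lim_{N→∞} |ℋ_{X|Y}|/N = H(X|Y), and lim_{N→∞} |ℒ_{X|Y}|/N = 1 − H(X|Y). -/

import Mathlib

open Finset Filter

namespace PolarSrc

/-- The polar kernel `F = [[1,0],[1,1]]` over `GF(2)`. -/
def Fker : Matrix (Fin 2) (Fin 2) (ZMod 2) := !![1, 0; 1, 1]

/-- Kronecker power `F^{⊗n}`. -/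
noncomputable def Fpow : (n : ℕ) → Matrix (Fin (2 ^ n)) (Fin (2 ^ n)) (ZMod 2)
  | 0 => 1
  | n + 1 =>
    Matrix.reindex
      (finProdFinEquiv.trans (finCongr (by rw [pow_succ, Nat.mul_comm])))
      (finProdFinEquiv.trans (finCongr (by rw [pow_succ, Nat.mul_comm])))
      (Matrix.kroneckerMap (· * ·) Fker (Fpow n))

/-- The bit-reversal permutation on `Fin (2^n)`. -/
def br : (n : ℕ) → Fin (2 ^ n) ≃ Fin (2 ^ n)
  | 0 => Equiv.refl _
  | n + 1 =>
    ((finCongr (by rw [pow_succ, Nat.mul_comm] : 2 ^ (n + 1) = 2 * 2 ^ n)).trans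
      ((finProdFinEquiv (m := 2) (n := 2 ^ n)).symm)).trans <|
    (((Equiv.refl (Fin 2)).prodCongr (br n)).trans (Equiv.prodComm _ _)).trans <|
    (finProdFinEquiv (m := 2 ^ n) (n := 2)).trans (finCongr (by rw [pow_succ]))

/-- Polar transform `U^N = X^N G_N` with `G_N = R F^{⊗n}` (`R` the bit reversal). -/
noncomputable def polarU (n : ℕ) (x : Fin (2 ^ n) → ZMod 2) (j : Fin (2 ^ n)) : ZMod 2 :=
  ∑ k, x k * Fpow n (br n k) j

/-- Probability (under the i.i.d. source with marginal `pm`) that `U_j = u` and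
the prefix `U_1^{j-1}` equals `pre`. -/
noncomputable def prU (n : ℕ) (pm : ZMod 2 → ℝ) (j : Fin (2 ^ n)) (u : ZMod 2)
    (pre : {i : Fin (2 ^ n) // i < j} → ZMod 2) : ℝ :=
  ∑ x ∈ Finset.univ.filter
      (fun x : Fin (2 ^ n) → ZMod 2 =>
        polarU n x j = u ∧ ∀ i : {i : Fin (2 ^ n) // i < j}, polarU n x i = pre i),
    ∏ i, pm (x i)

/-- Bhattacharyya parameter `Z(U_j | U_1^{j-1})`. -/
noncomputable def Zsrc (n : ℕ) (pm : ZMod 2 → ℝ) (j : Fin (2 ^ n)) : ℝ :=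
  2 * ∑ pre : {i : Fin (2 ^ n) // i < j} → ZMod 2,
    Real.sqrt (prU n pm j 0 pre * prU n pm j 1 pre)

/-- Probability that `U_j = u`, `U_1^{j-1} = pre` and `Y^N = y`, under the i.i.d.
joint source `p` on `X × Y`. -/
noncomputable def prUY {Y : Type*} [Fintype Y] (n : ℕ) (p : ZMod 2 × Y → ℝ)
    (j : Fin (2 ^ n)) (u : ZMod 2)
    (pre : {i : Fin (2 ^ n) // i < j} → ZMod 2) (y : Fin (2 ^ n) → Y) : ℝ :=
  ∑ x ∈ Finset.univ.filter
      (fun x : Fin (2 ^ n) → ZMod 2 =>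
        polarU n x j = u ∧ ∀ i : {i : Fin (2 ^ n) // i < j}, polarU n x i = pre i),
    ∏ i, p (x i, y i)

/-- Bhattacharyya parameter `Z(U_j | U_1^{j-1}, Y^N)`. -/
noncomputable def Zcond {Y : Type*} [Fintype Y] (n : ℕ) (p : ZMod 2 × Y → ℝ)
    (j : Fin (2 ^ n)) : ℝ :=
  2 * ∑ pre : {i : Fin (2 ^ n) // i < j} → ZMod 2, ∑ y : Fin (2 ^ n) → Y,
    Real.sqrt (prUY n p j 0 pre y * prUY n p j 1 pre y)

/-- `δ_N = 2^{-N^β}` with `N = 2^n`. -/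
noncomputable def deltaN (n : ℕ) (β : ℝ) : ℝ := (2 : ℝ) ^ (-(((2 : ℝ) ^ n) ^ β))

open Classical in
/-- High-entropy source set `ℋ_X`. -/
noncomputable def HXset (n : ℕ) (pm : ZMod 2 → ℝ) (β : ℝ) : Finset (Fin (2 ^ n)) :=
  Finset.univ.filter (fun j => 1 - deltaN n β ≤ Zsrc n pm j)

open Classical in
/-- Low-entropy source set `ℒ_X`. -/
noncomputable def LXset (n : ℕ) (pm : ZMod 2 → ℝ) (β : ℝ) : Finset (Fin (2 ^ n)) :=
  Finset.univ.filter (fun j => Zsrc n pm j ≤ deltaN n β)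

open Classical in
/-- High-entropy set `ℋ_{X|Y}`. -/
noncomputable def HXYset {Y : Type*} [Fintype Y] (n : ℕ) (p : ZMod 2 × Y → ℝ)
    (β : ℝ) : Finset (Fin (2 ^ n)) :=
  Finset.univ.filter (fun j => 1 - deltaN n β ≤ Zcond n p j)

open Classical in
/-- Low-entropy set `ℒ_{X|Y}`. -/
noncomputable def LXYset {Y : Type*} [Fintype Y] (n : ℕ) (p : ZMod 2 × Y → ℝ)
    (β : ℝ) : Finset (Fin (2 ^ n)) :=
  Finset.univ.filter (fun j => Zcond n p j ≤ deltaN n β)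

/-- Marginal law of `X`. -/
noncomputable def pmX {Y : Type*} [Fintype Y] (p : ZMod 2 × Y → ℝ) (x : ZMod 2) : ℝ :=
  ∑ y, p (x, y)

/-- Entropy `H(X)` in bits. -/
noncomputable def entX {Y : Type*} [Fintype Y] (p : ZMod 2 × Y → ℝ) : ℝ :=
  -∑ x, pmX p x * Real.logb 2 (pmX p x)

/-- Conditional entropy `H(X|Y)` in bits. -/
noncomputable def entXY {Y : Type*} [Fintype Y] (p : ZMod 2 × Y → ℝ) : ℝ :=
  -∑ x, ∑ y, p (x, y) * Real.logb 2 (p (x, y) / (∑ x', p (x', y)))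



/-- Abstract polarization process. -/
structure Pol (Z T H : ℕ → ℕ → ℝ) : Prop where
  Z0 : ∀ n j, j < 2 ^ n → 0 ≤ Z n j
  T0 : ∀ n j, j < 2 ^ n → 0 ≤ T n j
  sq : ∀ n j, j < 2 ^ n → Z n j ^ 2 + T n j ^ 2 ≤ 1
  add : ∀ n j, j < 2 ^ n → 1 ≤ Z n j + T n j
  Zp : ∀ n j, j < 2 ^ n → Z (n + 1) (2 * j + 1) = Z n j ^ 2
  Zm : ∀ n j, j < 2 ^ n → Z (n + 1) (2 * j) ≤ 2 * Z n j - Z n j ^ 2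
  Tm : ∀ n j, j < 2 ^ n → T (n + 1) (2 * j) = T n j ^ 2
  Tp : ∀ n j, j < 2 ^ n → T (n + 1) (2 * j + 1) ≤ 2 * T n j - T n j ^ 2
  Hc : ∀ n j, j < 2 ^ n → H (n + 1) (2 * j) + H (n + 1) (2 * j + 1) = 2 * H n j
  Hl : ∀ n j, j < 2 ^ n → H n j ≤ Real.log 2
  HZ : ∀ n j, j < 2 ^ n → H n j ≤ Z n j
  HN : ∀ n j, j < 2 ^ n → 0 ≤ H n j
  HT : ∀ n j, j < 2 ^ n → Real.log 2 - T n j ≤ H n j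

lemma contr_aux {z t : ℝ} (hz : 0 ≤ z) (ht : 0 ≤ t) (h : z ^ 2 + t ^ 2 ≤ 1) (hzt : z ≤ t) :
    √(z * (2 - t)) + √(t * (2 - z)) ≤ 2 * 0.9995 := by
  have ht1 : t ≤ 1 := by nlinarith
  rcases le_total z 0.1 with h1 | h1
  · have a1 : √(z * (2 - t)) ≤ 0.45 := by
      apply Real.sqrt_le_iff.2; constructor
      · norm_num
      · nlinarith
    have a2 : √(t * (2 - z)) ≤ 1.42 := by
      apply Real.sqrt_le_iff.2; constructor
      · norm_num
      · nlinarith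
    linarith
  · have hz2 : z ≤ 0.71 := by nlinarith
    have ht2 : t ≤ 0.996 := by nlinarith
    have n1 : 0 ≤ z * (2 - t) := mul_nonneg hz (by linarith)
    have n2 : 0 ≤ t * (2 - z) := mul_nonneg ht (by linarith)
    have s1 := Real.sq_sqrt n1
    have s2 := Real.sq_sqrt n2
    apply le_of_sq_le_sq _ (by norm_num)
    have : 0.29 * 0.004 ≤ (1 - z) * (1 - t) :=
      mul_le_mul (by linarith) (by linarith) (by norm_num) (by linarith)
    nlinarith [sq_nonneg (√(z * (2 - t)) - √(t * (2 - z)))]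

lemma contr {z t : ℝ} (hz : 0 ≤ z) (ht : 0 ≤ t) (h : z ^ 2 + t ^ 2 ≤ 1) :
    √(z * (2 - t)) + √(t * (2 - z)) ≤ 2 * 0.9995 := by
  rcases le_total z t with h1 | h1
  · exact contr_aux hz ht h h1
  · rw [add_comm]; exact contr_aux ht hz (by linarith) h1

lemma sum_range_double (f : ℕ → ℝ) (N : ℕ) :
    ∑ j ∈ range (2 * N), f j = ∑ j ∈ range N, (f (2 * j) + f (2 * j + 1)) := by
  induction N with
  | zero => simp
  | succ N ih =>
    rw [show 2 * (N + 1) = 2 * N + 1 + 1 by ring, sum_range_succ, sum_range_succ, ih,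
      sum_range_succ]; ring

lemma sum_range_pow (f : ℕ → ℝ) (n : ℕ) :
    ∑ j ∈ range (2 ^ (n + 1)), f j = ∑ j ∈ range (2 ^ n), (f (2 * j) + f (2 * j + 1)) := by
  rw [pow_succ, mul_comm, sum_range_double]

section
variable {Z T H : ℕ → ℕ → ℝ}

lemma Pol.one_step (h : Pol Z T H) (n j : ℕ) (hj : j < 2 ^ n) :
    √(Z (n+1) (2*j) * T (n+1) (2*j)) + √(Z (n+1) (2*j+1) * T (n+1) (2*j+1))
      ≤ 2 * 0.9995 * √(Z n j * T n j) := by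
  have z0 := h.Z0 n j hj
  have t0 := h.T0 n j hj
  have c := contr z0 t0 (h.sq n j hj)
  have z1 : Z n j ≤ 1 := by nlinarith [h.sq n j hj]
  have t1 : T n j ≤ 1 := by nlinarith [h.sq n j hj]
  have a1 : √(Z (n+1) (2*j) * T (n+1) (2*j)) ≤ √(Z n j * T n j) * √(T n j * (2 - Z n j)) := by
    rw [← Real.sqrt_mul (mul_nonneg z0 t0)]
    apply Real.sqrt_le_sqrt
    rw [h.Tm n j hj]
    have := mul_le_mul_of_nonneg_right (h.Zm n j hj) (sq_nonneg (T n j))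
    nlinarith
  have a2 : √(Z (n+1) (2*j+1) * T (n+1) (2*j+1)) ≤ √(Z n j * T n j) * √(Z n j * (2 - T n j)) := by
    rw [← Real.sqrt_mul (mul_nonneg z0 t0)]
    apply Real.sqrt_le_sqrt
    rw [h.Zp n j hj]
    have := mul_le_mul_of_nonneg_left (h.Tp n j hj) (sq_nonneg (Z n j))
    nlinarith
  have := mul_le_mul_of_nonneg_left c (Real.sqrt_nonneg (Z n j * T n j))
  linarith

lemma Pol.exp_decay (h : Pol Z T H) (n : ℕ) :
    ∑ j ∈ range (2 ^ n), √(Z n j * T n j) ≤ 2 ^ n * (0.9995 : ℝ) ^ n := by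
  induction n with
  | zero =>
    simp only [pow_zero, range_one, sum_singleton, mul_one]
    apply Real.sqrt_le_one.2
    have z0 := h.Z0 0 0 (by norm_num)
    have t0 := h.T0 0 0 (by norm_num)
    have := h.sq 0 0 (by norm_num)
    nlinarith [sq_nonneg (Z 0 0 - T 0 0)]
  | succ n ih =>
    rw [sum_range_pow]
    calc _ ≤ ∑ j ∈ range (2 ^ n), 2 * 0.9995 * √(Z n j * T n j) :=
          Finset.sum_le_sum fun j hj => h.one_step n j (mem_range.1 hj)
      _ = 2 * 0.9995 * ∑ j ∈ range (2 ^ n), √(Z n j * T n j) := by rw [Finset.mul_sum]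
      _ ≤ 2 * 0.9995 * (2 ^ n * (0.9995 : ℝ) ^ n) := mul_le_mul_of_nonneg_left ih (by norm_num)
      _ = _ := by rw [pow_succ, pow_succ]; ring

lemma Pol.sumH (h : Pol Z T H) (n : ℕ) : ∑ j ∈ range (2 ^ n), H n j = 2 ^ n * H 0 0 := by
  induction n with
  | zero => simp
  | succ n ih =>
    rw [sum_range_pow, Finset.sum_congr rfl fun j hj => h.Hc n j (mem_range.1 hj), ← Finset.mul_sum,
      ih, pow_succ]; ring
end

open Classical in
/-- fraction of indices satisfying `P` -/
noncomputable def frac (n : ℕ) (P : ℕ → Prop) : ℝ :=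
  (∑ j ∈ range (2 ^ n), if P j then (1 : ℝ) else 0) / 2 ^ n

lemma frac_mono {n : ℕ} {P Q : ℕ → Prop} (hPQ : ∀ j < 2 ^ n, P j → Q j) : frac n P ≤ frac n Q := by
  unfold frac
  refine div_le_div_of_nonneg_right (Finset.sum_le_sum fun j hj => ?_) (by positivity)
  have := hPQ j (mem_range.1 hj)
  split_ifs <;> first | tauto | norm_num

lemma frac_or {n : ℕ} {P Q : ℕ → Prop} : frac n (fun j => P j ∨ Q j) ≤ frac n P + frac n Q := by
  unfold frac
  rw [← add_div, ← Finset.sum_add_distrib]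
  refine div_le_div_of_nonneg_right (Finset.sum_le_sum fun j hj => ?_) (by positivity)
  split_ifs <;> first | tauto | norm_num

lemma frac_true {n : ℕ} : frac n (fun _ => True) = 1 := by
  unfold frac; simp

lemma frac_nonneg {n : ℕ} {P : ℕ → Prop} : 0 ≤ frac n P := by
  unfold frac
  refine div_nonneg (Finset.sum_nonneg fun j hj => ?_) (by positivity)
  split_ifs <;> norm_num

/-- Markov -/
lemma frac_markov {n : ℕ} {P : ℕ → Prop} (g : ℕ → ℝ) (c : ℝ) (hg : ∀ j < 2 ^ n, 0 ≤ g j)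
    (hP : ∀ j < 2 ^ n, P j → c ≤ g j) : c * frac n P ≤ (∑ j ∈ range (2 ^ n), g j) / 2 ^ n := by
  unfold frac
  rw [← mul_div_assoc, Finset.mul_sum]
  refine div_le_div_of_nonneg_right (Finset.sum_le_sum fun j hj => ?_) (by positivity)
  have h1 := hP j (mem_range.1 hj)
  have h2 := hg j (mem_range.1 hj)
  split_ifs with h
  · simpa using h1 h
  · simpa using h2

lemma sum_range_mul' (f : ℕ → ℝ) (a b : ℕ) :
    ∑ j ∈ range (a * b), f j = ∑ i ∈ range a, ∑ w ∈ range b, f (i * b + w) := by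
  induction a with
  | zero => simp
  | succ a ih => rw [add_mul, one_mul, Finset.sum_range_add, ih, sum_range_succ]

lemma frac_div (m k : ℕ) (P : ℕ → Prop) : frac (m + k) (fun j => P (j / 2 ^ k)) = frac m P := by
  classical
  unfold frac
  rw [pow_add, sum_range_mul', pow_add]
  beta_reduce
  have e : ∀ i, ∀ w ∈ range (2 ^ k), (i * 2 ^ k + w) / 2 ^ k = i := by
    intro i w hw
    rw [mem_range] at hw
    rw [Nat.mul_comm, Nat.mul_add_div (by positivity), Nat.div_eq_of_lt hw, add_zero]
  have e2 : ∀ i ∈ range (2 ^ m), (∑ w ∈ range (2 ^ k), if P ((i * 2 ^ k + w) / 2 ^ k) then (1 : ℝ) else 0)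
      = 2 ^ k * (if P i then (1 : ℝ) else 0) := by
    intro i _
    rw [Finset.sum_congr rfl (g := fun _ => if P i then (1 : ℝ) else 0) fun w hw => by rw [e i w hw]]
    simp
  rw [Finset.sum_congr rfl e2, ← Finset.mul_sum]
  push_cast
  field_simp

lemma frac_mod (m k : ℕ) (P : ℕ → Prop) : frac (m + k) (fun j => P (j % 2 ^ k)) = frac k P := by
  classical
  unfold frac
  rw [pow_add, sum_range_mul', pow_add]
  beta_reduce
  have e : ∀ i, ∀ w ∈ range (2 ^ k), (i * 2 ^ k + w) % 2 ^ k = w := by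
    intro i w hw
    rw [mem_range] at hw
    rw [Nat.mul_comm, Nat.mul_add_mod, Nat.mod_eq_of_lt hw]
  have e2 : ∀ i ∈ range (2 ^ m), (∑ w ∈ range (2 ^ k), if P ((i * 2 ^ k + w) % 2 ^ k) then (1 : ℝ) else 0)
      = ∑ w ∈ range (2 ^ k), (if P w then (1 : ℝ) else 0) := by
    intro i _
    exact Finset.sum_congr rfl fun w hw => by rw [e i w hw]
  rw [Finset.sum_congr rfl e2]
  simp only [Finset.sum_const, card_range, nsmul_eq_mul]
  push_cast
  field_simp

/-- number of low-order bits equal to `c` -/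
def cnt (c : ℕ) : ℕ → ℕ → ℕ
  | 0, _ => 0
  | k + 1, w => cnt c k (w / 2) + if w % 2 = c then 1 else 0

lemma cnt_var (c : ℕ) (hc : c = 0 ∨ c = 1) (k : ℕ) :
    ∑ w ∈ range (2 ^ k), (2 * (cnt c k w : ℝ) - (k : ℝ)) ^ 2 = (k : ℝ) * (2 : ℝ) ^ k := by
  induction k with
  | zero => simp [cnt]
  | succ k ih =>
    rw [sum_range_pow]
    have e : ∀ w, (2 * (cnt c (k+1) (2*w) : ℝ) - (k + 1 : ℕ)) ^ 2 +
      (2 * (cnt c (k+1) (2*w+1) : ℝ) - (k + 1 : ℕ)) ^ 2 = 2 * (2 * (cnt c k w : ℝ) - k) ^ 2 + 2 := by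
      intro w
      have e1 : 2 * w / 2 = w := by omega
      have e2 : (2 * w + 1) / 2 = w := by omega
      have e3 : 2 * w % 2 = 0 := by omega
      have e4 : (2 * w + 1) % 2 = 1 := by omega
      simp only [cnt, e1, e2, e3, e4]
      rcases hc with rfl | rfl <;> simp <;> ring
    simp only [e]
    rw [Finset.sum_add_distrib, ← Finset.mul_sum, ih]
    simp
    ring

lemma cnt_tail (c : ℕ) (hc : c = 0 ∨ c = 1) (k : ℕ) (hk : 0 < k) (α : ℝ) (hα : α < 1 / 2) :
    frac k (fun w => (cnt c k w : ℝ) < α * k) ≤ 1 / (1 - 2 * α) ^ 2 / k := by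
  have hk' : (0 : ℝ) < k := by exact_mod_cast hk
  have := frac_markov (n := k) (P := fun w => (cnt c k w : ℝ) < α * k)
    (fun w => (2 * (cnt c k w : ℝ) - k) ^ 2) (((1 - 2 * α) * k) ^ 2) (fun _ _ => sq_nonneg _) (by
      intro w _ hw
      have h1 : (1 - 2 * α) * k ≤ k - 2 * cnt c k w := by nlinarith
      have h0 : 0 ≤ (1 - 2 * α) * k := mul_nonneg (by linarith) hk'.le
      have := pow_le_pow_left₀ h0 h1 2
      nlinarith)
  rw [cnt_var c hc, mul_div_assoc, div_self (by positivity), mul_one] at this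
  have h2 : 0 < 1 - 2 * α := by linarith
  rw [div_div, le_div_iff₀ (by positivity)]
  have h3 : (frac k (fun w => (cnt c k w : ℝ) < α * k) * ((1 - 2 * α) ^ 2 * k)) * k ≤ 1 * k := by
    linarith
  exact le_of_mul_le_mul_right h3 hk'

/-- one-sided process: squares on bit `c`, at most doubles otherwise -/
structure Side (c : ℕ) (W : ℕ → ℕ → ℝ) : Prop where
  W0 : ∀ n j, j < 2 ^ n → 0 ≤ W n j
  sq : ∀ n j b, j < 2 ^ n → b < 2 → b = c → W (n + 1) (2 * j + b) ≤ W n j ^ 2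
  db : ∀ n j b, j < 2 ^ n → b < 2 → b ≠ c → W (n + 1) (2 * j + b) ≤ 2 * W n j

lemma Side.grow {c : ℕ} {W : ℕ → ℕ → ℝ} (h : Side c W) (m i k w : ℕ) (hi : i < 2 ^ m)
    (hw : w < 2 ^ k) (L : ℝ) (hL : W m i ≤ (2 : ℝ) ^ (-L)) :
    W (m + k) (i * 2 ^ k + w) ≤ (2 : ℝ) ^ (-((L - k) * 2 ^ (cnt c k w))) := by
  induction k generalizing w with
  | zero =>
    have : w = 0 := by simpa using hw
    subst this
    simpa [cnt] using hL
  | succ k ih =>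
    have hw2 : w / 2 < 2 ^ k := by rw [pow_succ] at hw; omega
    have ihw := ih (w / 2) hw2
    have hb : w % 2 < 2 := by omega
    have hj : i * 2 ^ k + w / 2 < 2 ^ (m + k) := by
      rw [pow_add]
      calc i * 2 ^ k + w / 2 < i * 2 ^ k + 2 ^ k := by omega
        _ = (i + 1) * 2 ^ k := by ring
        _ ≤ 2 ^ m * 2 ^ k := Nat.mul_le_mul_right _ hi
    have e : i * 2 ^ (k + 1) + w = 2 * (i * 2 ^ k + w / 2) + w % 2 := by
      rw [pow_succ]
      have := Nat.div_add_mod w 2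
      nlinarith
    rw [e, ← add_assoc]
    have w0 := h.W0 _ _ hj
    have h2k : (1 : ℝ) ≤ 2 ^ cnt c k (w / 2) := one_le_pow₀ (by norm_num)
    by_cases hc : w % 2 = c
    · refine (h.sq _ _ _ hj hb hc).trans ((pow_le_pow_left₀ w0 ihw 2).trans ?_)
      rw [← Real.rpow_natCast, ← Real.rpow_mul (by norm_num)]
      apply Real.rpow_le_rpow_of_exponent_le (by norm_num)
      simp only [cnt, hc, if_true, pow_succ]
      push_cast
      nlinarith
    · refine (h.db _ _ _ hj hb hc).trans ((mul_le_mul_of_nonneg_left ihw (by norm_num)).trans ?_)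
      have : (2 : ℝ) * 2 ^ (-((L - k) * 2 ^ (cnt c k (w / 2))))
          = 2 ^ (1 + -((L - k) * 2 ^ (cnt c k (w / 2)))) := by
        rw [Real.rpow_add (by norm_num), Real.rpow_one]
      rw [this]
      apply Real.rpow_le_rpow_of_exponent_le (by norm_num)
      simp only [cnt, hc, if_false, add_zero]
      push_cast
      nlinarith

lemma Side.two {c : ℕ} {W : ℕ → ℕ → ℝ} (h : Side c W) (D k k2 M : ℕ) (hM : 1 ≤ M) (hk : 4 * M ≤ k)
    (hn : D * k + k + k2 + 1 ≤ M * (k + 1)) (hD : (0.9995 : ℝ) ^ D ≤ 1 / 4)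
    (i w1 w2 : ℕ) (hi : i < 2 ^ (D * k)) (hw1 : w1 < 2 ^ k) (hw2 : w2 < 2 ^ k2)
    (hW : W (D * k) i ≤ 2 * (0.9995 : ℝ) ^ (D * k))
    (hc1 : ¬ (cnt c k w1 : ℝ) < 1 / 4 * k)
    (β : ℝ) (hc2 : β * (D * k + k + k2 : ℕ) ≤ cnt c k2 w2) :
    W (D * k + k + k2) ((i * 2 ^ k + w1) * 2 ^ k2 + w2) ≤ deltaN (D * k + k + k2) β := by
  have a0 : W (D * k) i ≤ (2 : ℝ) ^ (-(2 * k - 1 : ℝ)) := by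
    refine hW.trans ?_
    rw [pow_mul]
    have := pow_le_pow_left₀ (by positivity) hD k
    have e : (2 : ℝ) ^ (-(2 * k - 1 : ℝ)) = 2 * (1 / 4) ^ k := by
      rw [show (-(2 * k - 1 : ℝ)) = 1 + (-2 : ℝ) * k by ring, Real.rpow_add (by norm_num),
        Real.rpow_one, Real.rpow_mul (by norm_num), Real.rpow_natCast]
      congr 2
      rw [Real.rpow_neg (by norm_num)]; norm_num
    rw [e]; linarith
  have a1 := h.grow _ i k w1 hi hw1 _ a0
  have hj : i * 2 ^ k + w1 < 2 ^ (D * k + k) := by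
    rw [pow_add]
    calc i * 2 ^ k + w1 < i * 2 ^ k + 2 ^ k := by omega
      _ = (i + 1) * 2 ^ k := by ring
      _ ≤ _ := Nat.mul_le_mul_right _ hi
  have hk' : (4 * M : ℝ) ≤ k := by exact_mod_cast hk
  have hM' : (1 : ℝ) ≤ M := by exact_mod_cast hM
  have hcM : M ≤ cnt c k w1 := by
    have : (M : ℝ) ≤ cnt c k w1 := by linarith
    exact_mod_cast this
  have hpow : (2 * M : ℝ) ≤ 2 ^ (cnt c k w1) := by
    have h1 : (2 : ℝ) ^ M ≤ 2 ^ (cnt c k w1) := pow_le_pow_right₀ (by norm_num) hcM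
    have h2 : 2 * M ≤ 2 ^ M := by
      obtain ⟨M', rfl⟩ : ∃ M', M = M' + 1 := ⟨M - 1, by omega⟩
      rw [pow_succ]
      have := Nat.lt_two_pow_self (n := M')
      omega
    have h3 : (2 * M : ℝ) ≤ 2 ^ M := by exact_mod_cast h2
    linarith
  have a2 := h.grow _ _ k2 w2 hj hw2 _ a1
  refine a2.trans ?_
  unfold deltaN
  apply Real.rpow_le_rpow_of_exponent_le (by norm_num)
  apply neg_le_neg
  have hn' : ((D * k + k + k2 : ℕ) : ℝ) + 1 ≤ M * (k + 1) := by exact_mod_cast hn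
  have hk2 : (k2 : ℝ) ≤ (D * k + k + k2 : ℕ) := by exact_mod_cast Nat.le_add_left _ _
  have b1 : 1 ≤ (2 * (k:ℝ) - 1 - k) * 2 ^ (cnt c k w1) - k2 := by
    have : (k - 1 : ℝ) * (2 * M) ≤ (k - 1) * 2 ^ (cnt c k w1) :=
      mul_le_mul_of_nonneg_left hpow (by linarith)
    have e : (2 * (k:ℝ) - 1 - k) = k - 1 := by ring
    rw [e]
    nlinarith
  calc ((2 : ℝ) ^ (D * k + k + k2)) ^ β = 2 ^ (β * (D * k + k + k2 : ℕ)) := by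
        rw [← Real.rpow_natCast, ← Real.rpow_mul (by norm_num), mul_comm]
    _ ≤ 2 ^ (cnt c k2 w2 : ℝ) := Real.rpow_le_rpow_of_exponent_le (by norm_num) hc2
    _ = 2 ^ (cnt c k2 w2) := Real.rpow_natCast _ _
    _ ≤ _ := le_mul_of_one_le_left (by positivity) b1

lemma Pol.sideZ {Z T H : ℕ → ℕ → ℝ} (h : Pol Z T H) : Side 1 Z where
  W0 := h.Z0
  sq n j b hj _ hc := by subst hc; exact (h.Zp n j hj).le
  db n j b hj hb hc := by
    have : b = 0 := by omega
    subst this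
    have := h.Zm n j hj
    rw [add_zero]; nlinarith

lemma Pol.sideT {Z T H : ℕ → ℕ → ℝ} (h : Pol Z T H) : Side 0 T where
  W0 := h.T0
  sq n j b hj _ hc := by subst hc; exact (h.Tm n j hj).le
  db n j b hj hb hc := by
    have : b = 1 := by omega
    subst this
    have := h.Tp n j hj
    nlinarith

lemma Pol.good {Z T H : ℕ → ℕ → ℝ} (h : Pol Z T H) (n : ℕ) :
    frac n (fun j => ¬ (Z n j ≤ 2 * (0.9995 : ℝ) ^ n ∨ T n j ≤ 2 * (0.9995 : ℝ) ^ n))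
      ≤ (√(0.9995 : ℝ)) ^ n := by
  have hr : 0 < √(0.9995 : ℝ) := Real.sqrt_pos.2 (by norm_num)
  have hc : (√(0.9995 : ℝ)) ^ n * (√(0.9995 : ℝ)) ^ n = (0.9995 : ℝ) ^ n := by
    rw [← mul_pow, Real.mul_self_sqrt (by norm_num)]
  have := frac_markov (n := n)
    (P := fun j => ¬ (Z n j ≤ 2 * (0.9995 : ℝ) ^ n ∨ T n j ≤ 2 * (0.9995 : ℝ) ^ n))
    (fun j => √(Z n j * T n j)) ((√(0.9995 : ℝ)) ^ n) (fun _ _ => Real.sqrt_nonneg _) (by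
      intro j hj hP
      push Not at hP
      apply Real.le_sqrt_of_sq_le
      rw [_root_.sq, hc]
      have z0 := h.Z0 n j hj
      have t0 := h.T0 n j hj
      have := h.add n j hj
      rcases le_total (Z n j) (T n j) with h1 | h1
      · nlinarith
      · nlinarith)
  have h2 : (∑ j ∈ range (2 ^ n), √(Z n j * T n j)) / 2 ^ n ≤ (0.9995 : ℝ) ^ n := by
    rw [div_le_iff₀ (by positivity), mul_comm]; exact h.exp_decay n
  have h3 := this.trans h2
  exact le_of_mul_le_mul_left (h3.trans hc.ge) (pow_pos hr n)

lemma Pol.bad {Z T H : ℕ → ℕ → ℝ} (h : Pol Z T H) (D k k2 M : ℕ) (hM : 1 ≤ M) (hk : 4 * M ≤ k)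
    (hk2 : 0 < k2)
    (hn : D * k + k + k2 + 1 ≤ M * (k + 1)) (hD : (0.9995 : ℝ) ^ D ≤ 1 / 4)
    (α β : ℝ) (hα : α < 1 / 2) (hαβ : β * (D * k + k + k2 : ℕ) ≤ α * k2) :
    frac (D * k + k + k2) (fun j => ¬ (Z (D * k + k + k2) j ≤ deltaN (D * k + k + k2) β ∨
      T (D * k + k + k2) j ≤ deltaN (D * k + k + k2) β)) ≤
      (√(0.9995 : ℝ)) ^ (D * k) + 2 * (4 / k) + 2 * (1 / (1 - 2 * α) ^ 2 / k2) := by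
  have hk0 : 0 < k := by omega
  have f0 := frac_div (D * k + k) k2 (fun j => ¬ (Z (D * k) (j / 2 ^ k) ≤ 2 * (0.9995 : ℝ) ^ (D * k) ∨
    T (D * k) (j / 2 ^ k) ≤ 2 * (0.9995 : ℝ) ^ (D * k)))
  rw [frac_div (D * k) k (fun j => ¬ (Z (D * k) j ≤ 2 * (0.9995 : ℝ) ^ (D * k) ∨
    T (D * k) j ≤ 2 * (0.9995 : ℝ) ^ (D * k)))] at f0
  have g0 := h.good (D * k)
  have f1 : ∀ c, frac (D * k + k + k2) (fun j => (cnt c k (j / 2 ^ k2 % 2 ^ k) : ℝ) < 1 / 4 * k) =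
      frac k (fun w => (cnt c k w : ℝ) < 1 / 4 * k) := by
    intro c
    rw [frac_div (D * k + k) k2 (fun j => (cnt c k (j % 2 ^ k) : ℝ) < 1 / 4 * k),
      frac_mod (D * k) k (fun j => (cnt c k j : ℝ) < 1 / 4 * k)]
  have f2 : ∀ c, frac (D * k + k + k2) (fun j => (cnt c k2 (j % 2 ^ k2) : ℝ) < α * k2) =
      frac k2 (fun w => (cnt c k2 w : ℝ) < α * k2) := fun c =>
    frac_mod (D * k + k) k2 (fun j => (cnt c k2 j : ℝ) < α * k2)
  have t1 : ∀ c, (c = 0 ∨ c = 1) → frac k (fun w => (cnt c k w : ℝ) < 1 / 4 * k) ≤ 4 / k := by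
    intro c hc
    have := cnt_tail c hc k hk0 (1 / 4) (by norm_num)
    norm_num at this ⊢
    exact this
  have t2 : ∀ c, (c = 0 ∨ c = 1) → frac k2 (fun w => (cnt c k2 w : ℝ) < α * k2) ≤ _ := fun c hc =>
    cnt_tail c hc k2 hk2 α hα
  have key : ∀ j < 2 ^ (D * k + k + k2), ¬ (Z (D * k + k + k2) j ≤ deltaN (D * k + k + k2) β ∨
      T (D * k + k + k2) j ≤ deltaN (D * k + k + k2) β) →
      ((((¬ (Z (D * k) (j / 2 ^ k2 / 2 ^ k) ≤ 2 * (0.9995 : ℝ) ^ (D * k) ∨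
    T (D * k) (j / 2 ^ k2 / 2 ^ k) ≤ 2 * (0.9995 : ℝ) ^ (D * k))) ∨
      (cnt 0 k (j / 2 ^ k2 % 2 ^ k) : ℝ) < 1 / 4 * k) ∨ (cnt 1 k (j / 2 ^ k2 % 2 ^ k) : ℝ) < 1 / 4 * k) ∨
      (cnt 0 k2 (j % 2 ^ k2) : ℝ) < α * k2) ∨ (cnt 1 k2 (j % 2 ^ k2) : ℝ) < α * k2 := by
    intro j hj hbad
    by_contra hcon
    rw [not_or, not_or, not_or, not_or, not_not] at hcon
    obtain ⟨⟨⟨⟨hg, c0⟩, c1⟩, d0⟩, d1⟩ := hcon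
    apply hbad
    have hi : j / 2 ^ k2 / 2 ^ k < 2 ^ (D * k) := by
      rw [Nat.div_lt_iff_lt_mul (by positivity), Nat.div_lt_iff_lt_mul (by positivity), ← pow_add,
        ← pow_add]
      exact hj
    have hw1 : j / 2 ^ k2 % 2 ^ k < 2 ^ k := Nat.mod_lt _ (by positivity)
    have hw2 : j % 2 ^ k2 < 2 ^ k2 := Nat.mod_lt _ (by positivity)
    have e : (j / 2 ^ k2 / 2 ^ k * 2 ^ k + j / 2 ^ k2 % 2 ^ k) * 2 ^ k2 + j % 2 ^ k2 = j := by
      rw [Nat.div_add_mod', Nat.div_add_mod']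
    rcases hg with hg | hg
    · left
      have := h.sideZ.two D k k2 M hM hk hn hD _ _ _ hi hw1 hw2 hg c1 β (by linarith)
      rwa [e] at this
    · right
      have := h.sideT.two D k k2 M hM hk hn hD _ _ _ hi hw1 hw2 hg c0 β (by linarith)
      rwa [e] at this
  refine (frac_mono key).trans ?_
  refine frac_or.trans ?_
  have u1 := t1 0 (Or.inl rfl)
  have u2 := t1 1 (Or.inr rfl)
  have u3 := t2 0 (Or.inl rfl)
  have u4 := t2 1 (Or.inr rfl)
  rw [f2]
  refine (add_le_add_left frac_or _).trans ?_
  rw [f2]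
  refine (add_le_add_left (add_le_add_left frac_or _) _).trans ?_
  rw [f1]
  refine (add_le_add_left (add_le_add_left (add_le_add_left frac_or _) _) _).trans ?_
  rw [f1, f0]
  linarith

lemma Pol.bad_tendsto {Z T H : ℕ → ℕ → ℝ} (h : Pol Z T H) (β : ℝ) (hβ : 0 < β ∧ β < 1 / 2) :
    Tendsto (fun n => frac n (fun j => ¬ (Z n j ≤ deltaN n β ∨ T n j ≤ deltaN n β))) atTop (nhds 0) := by
  obtain ⟨hβ0, hβ1⟩ := hβ
  obtain ⟨D, hD⟩ : ∃ D : ℕ, (0.9995 : ℝ) ^ D < 1 / 4 := exists_pow_lt_of_lt_one (by norm_num) (by norm_num)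
  have hD1 : 1 ≤ D := by
    by_contra hh
    have : D = 0 := by omega
    subst this
    norm_num at hD
  obtain ⟨α, hβα, hα⟩ := exists_between hβ1
  obtain ⟨M, hM⟩ := exists_nat_gt ((D + 1 : ℝ) * α / (α - β))
  have hαβ : 0 < α - β := by linarith
  have hα0 : 0 < α := by linarith
  rw [div_lt_iff₀ hαβ] at hM
  have hMD : D + 1 < M := by
    by_contra hh
    have : (M : ℝ) ≤ D + 1 := by exact_mod_cast not_lt.1 hh
    nlinarith
  have hkT : Tendsto (fun n : ℕ => n / M) atTop atTop :=
    Nat.tendsto_div_const_atTop (by omega)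
  have hle : ∀ n, (D + 1) * (n / M) ≤ n := fun n => by
    have := Nat.div_mul_le_self n M
    nlinarith [Nat.zero_le (n / M)]
  have hk2 : ∀ n : ℕ, β * n ≤ α * (n - (D + 1) * (n / M) : ℕ) := by
    intro n
    rw [Nat.cast_sub (hle n)]
    push_cast
    have h1 : ((n / M : ℕ) : ℝ) * M ≤ n := by exact_mod_cast Nat.div_mul_le_self n M
    have hM0 : (0 : ℝ) < M := by exact_mod_cast (by omega : 0 < M)
    have h2 : α * ((D + 1) * ((n / M : ℕ) : ℝ)) ≤ (α - β) * n := by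
      have : (0:ℝ) ≤ ((n / M : ℕ) : ℝ) := by positivity
      calc _ = ((D + 1 : ℝ) * α) * ((n / M : ℕ) : ℝ) := by ring
        _ ≤ (M * (α - β)) * ((n / M : ℕ) : ℝ) := mul_le_mul_of_nonneg_right hM.le this
        _ = (α - β) * (((n / M : ℕ) : ℝ) * M) := by ring
        _ ≤ _ := mul_le_mul_of_nonneg_left h1 hαβ.le
    linarith
  have hk2T : Tendsto (fun n : ℕ => ((n - (D + 1) * (n / M) : ℕ) : ℝ)) atTop atTop := by
    have t : Tendsto (fun n : ℕ => β / α * (n : ℝ)) atTop atTop :=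
      Tendsto.const_mul_atTop (by positivity) tendsto_natCast_atTop_atTop
    refine tendsto_atTop_mono (fun n => ?_) t
    rw [div_mul_eq_mul_div, div_le_iff₀ hα0]
    linarith [hk2 n]
  have hkR : Tendsto (fun n : ℕ => ((n / M : ℕ) : ℝ)) atTop atTop :=
    tendsto_natCast_atTop_atTop.comp hkT
  have hDk : Tendsto (fun n : ℕ => D * (n / M)) atTop atTop :=
    tendsto_atTop_mono (fun n => Nat.le_mul_of_pos_left _ hD1) hkT
  have lim : Tendsto (fun n : ℕ => (√(0.9995 : ℝ)) ^ (D * (n / M)) + 2 * (4 / ((n / M : ℕ) : ℝ))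
      + 2 * (1 / (1 - 2 * α) ^ 2 / ((n - (D + 1) * (n / M) : ℕ) : ℝ))) atTop (nhds 0) := by
    have l1 : Tendsto (fun n : ℕ => (√(0.9995 : ℝ)) ^ (D * (n / M))) atTop (nhds 0) :=
      (tendsto_pow_atTop_nhds_zero_of_lt_one (Real.sqrt_nonneg _)
        (by rw [Real.sqrt_lt' one_pos]; norm_num)).comp hDk
    have l2 := (tendsto_const_nhds (x := (4 : ℝ))).div_atTop hkR
    have l3 := (tendsto_const_nhds (x := 1 / (1 - 2 * α) ^ 2)).div_atTop hk2T
    simpa using (l1.add (l2.const_mul 2)).add (l3.const_mul 2)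
  refine tendsto_of_tendsto_of_tendsto_of_le_of_le' tendsto_const_nhds lim
    (Eventually.of_forall fun n => frac_nonneg) ?_
  filter_upwards [hkT.eventually_ge_atTop (4 * M), hk2T.eventually_gt_atTop 0] with n hn1 hn2
  have e : D * (n / M) + n / M + (n - (D + 1) * (n / M)) = n := by
    have := hle n
    rw [add_mul, one_mul] at *
    omega
  have := h.bad D (n / M) (n - (D + 1) * (n / M)) M (by omega) hn1 (by exact_mod_cast hn2)
    (by rw [e]
        have := Nat.lt_mul_div_succ n (show 0 < M by omega)
        omega) hD.le α β hα (by rw [e]; exact hk2 n)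
  rw [e] at this
  exact this

lemma deltaN_tendsto (β : ℝ) (hβ : 0 < β) : Tendsto (fun n => deltaN n β) atTop (nhds 0) := by
  have t : Tendsto (fun n : ℕ => ((2 : ℝ) ^ n) ^ β) atTop atTop :=
    (tendsto_rpow_atTop hβ).comp (tendsto_pow_atTop_atTop_of_one_lt (by norm_num))
  exact (tendsto_rpow_atBot_of_base_gt_one 2 (by norm_num)).comp (tendsto_neg_atTop_atBot.comp t)

lemma Pol.main {Z T H : ℕ → ℕ → ℝ} (h : Pol Z T H) (β : ℝ) (hβ : 0 < β ∧ β < 1 / 2) :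
    Tendsto (fun n => frac n (fun j => 1 - deltaN n β ≤ Z n j)) atTop (nhds (H 0 0 / Real.log 2)) ∧
    Tendsto (fun n => frac n (fun j => Z n j ≤ deltaN n β)) atTop (nhds (1 - H 0 0 / Real.log 2)) := by
  have hb := h.bad_tendsto β hβ
  have hd := deltaN_tendsto β hβ.1
  have hl : 0 < Real.log 2 := Real.log_pos (by norm_num)
  have hd0 : ∀ n, 0 < deltaN n β := fun n => Real.rpow_pos_of_pos (by norm_num) _
  have hsd : Tendsto (fun n => √(2 * deltaN n β)) atTop (nhds 0) := by
    simpa using (hd.const_mul 2).sqrt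
  have hHge0 : ∀ n j, j < 2 ^ n → 0 ≤ H n j + T n j - Real.log 2 := fun n j hj => by
    linarith [h.HT n j hj]
  -- covering
  have cov : ∀ n, 1 - frac n (fun j => ¬ (Z n j ≤ deltaN n β ∨ T n j ≤ deltaN n β)) ≤
      frac n (fun j => Z n j ≤ deltaN n β) + frac n (fun j => 1 - deltaN n β ≤ Z n j) := by
    intro n
    have h1 : frac n (fun _ => True) ≤ frac n (fun j =>
      (Z n j ≤ deltaN n β ∨ 1 - deltaN n β ≤ Z n j) ∨ ¬ (Z n j ≤ deltaN n β ∨ T n j ≤ deltaN n β)) := by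
      apply frac_mono
      intro j hj _
      have := h.add n j hj
      by_cases ha : Z n j ≤ deltaN n β
      · exact Or.inl (Or.inl ha)
      · by_cases hb : T n j ≤ deltaN n β
        · exact Or.inl (Or.inr (by linarith))
        · exact Or.inr (by tauto)
    rw [frac_true] at h1
    have h2 := h1.trans frac_or
    have h3 := frac_or (n := n) (P := fun j => Z n j ≤ deltaN n β) (Q := fun j => 1 - deltaN n β ≤ Z n j)
    linarith
  -- upper bound on low set
  have upL : ∀ n, frac n (fun j => Z n j ≤ deltaN n β) ≤ 1 - H 0 0 / Real.log 2 + deltaN n β / Real.log 2 := by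
    intro n
    have := frac_markov (n := n) (P := fun j => Z n j ≤ deltaN n β)
      (fun j => Real.log 2 + deltaN n β - H n j) (Real.log 2)
      (fun j hj => by linarith [h.Hl n j hj, hd0 n]) (fun j hj hP => by linarith [h.HZ n j hj])
    rw [Finset.sum_sub_distrib, h.sumH] at this
    simp only [sum_const, card_range, nsmul_eq_mul] at this
    push_cast at this
    rw [← mul_sub, mul_div_cancel_left₀ _ (by positivity : (2 : ℝ) ^ n ≠ 0)] at this
    rw [← sub_nonneg]
    have e : 1 - H 0 0 / Real.log 2 + deltaN n β / Real.log 2 - frac n (fun j => Z n j ≤ deltaN n β)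
      = (Real.log 2 + deltaN n β - H 0 0 - Real.log 2 * frac n (fun j => Z n j ≤ deltaN n β)) / Real.log 2 := by
      field_simp; ring
    rw [e]
    exact div_nonneg (by linarith) hl.le
  have H0 := h.HN
  have upH : ∀ n, frac n (fun j => 1 - deltaN n β ≤ Z n j) ≤ H 0 0 / Real.log 2 + √(2 * deltaN n β) / Real.log 2 := by
    intro n
    have := frac_markov (n := n) (P := fun j => 1 - deltaN n β ≤ Z n j)
      (fun j => H n j + √(2 * deltaN n β)) (Real.log 2)
      (fun j hj => by linarith [H0 n j hj, Real.sqrt_nonneg (2 * deltaN n β)])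
      (fun j hj hP => by
        have h1 := h.HT n j hj
        have h2 : T n j ≤ √(2 * deltaN n β) := by
          apply Real.le_sqrt_of_sq_le
          have := h.sq n j hj
          have z0 := h.Z0 n j hj
          rcases le_total (deltaN n β) 1 with h3 | h3
          · nlinarith
          · nlinarith [sq_nonneg (Z n j)]
        linarith)
    rw [Finset.sum_add_distrib, h.sumH] at this
    simp only [sum_const, card_range, nsmul_eq_mul] at this
    push_cast at this
    rw [← mul_add, mul_div_cancel_left₀ _ (by positivity : (2 : ℝ) ^ n ≠ 0)] at this
    rw [← add_div, le_div_iff₀ hl]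
    linarith
  have l1 : Tendsto (fun n => 1 - H 0 0 / Real.log 2 + deltaN n β / Real.log 2) atTop
      (nhds (1 - H 0 0 / Real.log 2)) := by
    simpa using (tendsto_const_nhds (x := 1 - H 0 0 / Real.log 2)).add (hd.div_const (Real.log 2))
  have l2 : Tendsto (fun n => H 0 0 / Real.log 2 + √(2 * deltaN n β) / Real.log 2) atTop
      (nhds (H 0 0 / Real.log 2)) := by
    simpa using (tendsto_const_nhds (x := H 0 0 / Real.log 2)).add (hsd.div_const (Real.log 2))
  have l3 : Tendsto (fun n => 1 - frac n (fun j => ¬ (Z n j ≤ deltaN n β ∨ T n j ≤ deltaN n β))) atTop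
      (nhds 1) := by simpa using (tendsto_const_nhds (x := (1:ℝ))).sub hb
  constructor
  · refine tendsto_of_tendsto_of_tendsto_of_le_of_le ?_ l2
      (fun n => by linarith [cov n, upL n] : ∀ n, _ ≤ _) upH
      (g := fun n => (1 - frac n (fun j => ¬ (Z n j ≤ deltaN n β ∨ T n j ≤ deltaN n β))) -
        (1 - H 0 0 / Real.log 2 + deltaN n β / Real.log 2))
    have := l3.sub l1
    simpa using this
  · refine tendsto_of_tendsto_of_tendsto_of_le_of_le ?_ l1
      (fun n => by linarith [cov n, upH n] : ∀ n, _ ≤ _) upL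
      (g := fun n => (1 - frac n (fun j => ¬ (Z n j ≤ deltaN n β ∨ T n j ≤ deltaN n β))) -
        (H 0 0 / Real.log 2 + √(2 * deltaN n β) / Real.log 2))
    exact l3.sub l2

noncomputable def phiZ (a b : ℝ) : ℝ := 2 * Real.sqrt (a * b)
noncomputable def phiT (a b : ℝ) : ℝ := |a - b|
noncomputable def phiH (a b : ℝ) : ℝ :=
  Real.negMulLog a + Real.negMulLog b - Real.negMulLog (a + b)

lemma phiZ_nonneg (a b : ℝ) : 0 ≤ phiZ a b := by unfold phiZ; positivity
lemma phiT_nonneg (a b : ℝ) : 0 ≤ phiT a b := abs_nonneg _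

lemma phiZ_plus {a b c d : ℝ} (ha : 0 ≤ a) (hb : 0 ≤ b) :
    phiZ (a * c) (b * d) + phiZ (b * c) (a * d) = phiZ a b * phiZ c d := by
  unfold phiZ
  have h1 : a * c * (b * d) = (a * b) * (c * d) := by ring
  have h2 : b * c * (a * d) = (a * b) * (c * d) := by ring
  rw [h1, h2, Real.sqrt_mul (mul_nonneg ha hb)]
  ring

lemma phiZ_minus {a b c d : ℝ} (ha : 0 ≤ a) (hb : 0 ≤ b) (hc : 0 ≤ c) (hd : 0 ≤ d) :
    phiZ (a * c + b * d) (b * c + a * d) ≤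
      (a + b) * phiZ c d + (c + d) * phiZ a b - phiZ a b * phiZ c d := by
  unfold phiZ
  have hP : 2 * √(a * b) ≤ a + b := by
    rw [Real.sqrt_mul ha]
    nlinarith [Real.sq_sqrt ha, Real.sq_sqrt hb, sq_nonneg (√a - √b)]
  have hQ : 2 * √(c * d) ≤ c + d := by
    rw [Real.sqrt_mul hc]
    nlinarith [Real.sq_sqrt hc, Real.sq_sqrt hd, sq_nonneg (√c - √d)]
  have sP := Real.sq_sqrt (mul_nonneg ha hb)
  have sQ := Real.sq_sqrt (mul_nonneg hc hd)
  have nP := Real.sqrt_nonneg (a * b)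
  have nQ := Real.sqrt_nonneg (c * d)
  set P := √(a * b)
  set Q := √(c * d)
  have key : √((a * c + b * d) * (b * c + a * d)) ≤ (a + b) * Q + (c + d) * P - 2 * P * Q := by
    apply Real.sqrt_le_iff.2
    constructor
    · nlinarith [mul_nonneg nP nQ, mul_nonneg (sub_nonneg.2 hP) nQ, mul_nonneg (sub_nonneg.2 hQ) nP]
    · have e : (a * c + b * d) * (b * c + a * d)
          = (a * b) * (c + d) ^ 2 + (c * d) * (a + b) ^ 2 - 4 * (a * b) * (c * d) := by ring
      rw [e, ← sP, ← sQ]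
      have := mul_nonneg (mul_nonneg nP nQ) (mul_nonneg (sub_nonneg.2 hP) (sub_nonneg.2 hQ))
      nlinarith [this]
  linarith

lemma phiT_minus (a b c d : ℝ) :
    phiT (a * c + b * d) (b * c + a * d) = phiT a b * phiT c d := by
  unfold phiT; rw [← abs_mul]; congr 1; ring

lemma phiT_plus {a b c d : ℝ} (ha : 0 ≤ a) (hb : 0 ≤ b) (hc : 0 ≤ c) (hd : 0 ≤ d) :
    phiT (a * c) (b * d) + phiT (b * c) (a * d) ≤
      (a + b) * phiT c d + (c + d) * phiT a b - phiT a b * phiT c d := by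
  unfold phiT
  rcases abs_cases (a * c - b * d) with ⟨h1, _⟩ | ⟨h1, _⟩ <;>
  rcases abs_cases (b * c - a * d) with ⟨h2, _⟩ | ⟨h2, _⟩ <;>
  rcases abs_cases (a - b) with ⟨h3, _⟩ | ⟨h3, _⟩ <;>
  rcases abs_cases (c - d) with ⟨h4, _⟩ | ⟨h4, _⟩ <;>
  rw [h1, h2, h3, h4] <;>
  nlinarith [mul_nonneg ha hc, mul_nonneg ha hd, mul_nonneg hb hc, mul_nonneg hb hd]

lemma phiH_chain (a b c d : ℝ) :
    phiH (a * c + b * d) (b * c + a * d) + (phiH (a * c) (b * d) + phiH (b * c) (a * d))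
      = (a + b) * phiH c d + (c + d) * phiH a b := by
  unfold phiH
  have e : a * c + b * d + (b * c + a * d) = (a + b) * (c + d) := by ring
  rw [e]
  simp only [Real.negMulLog_mul]
  ring

lemma phiH_eq {a b : ℝ} (ha : 0 ≤ a) (hb : 0 ≤ b) :
    phiH a b = -(a * Real.log (a / (a + b))) - b * Real.log (b / (a + b)) := by
  unfold phiH Real.negMulLog
  rcases ha.eq_or_lt with rfl | ha
  · rcases hb.eq_or_lt with rfl | hb
    · simp
    · simp [hb.ne']
  · rcases hb.eq_or_lt with rfl | hb
    · simp [ha.ne']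
    · rw [Real.log_div ha.ne' (by positivity), Real.log_div hb.ne' (by positivity)]; ring

lemma phiH_le_log {a b : ℝ} (ha : 0 ≤ a) (hb : 0 ≤ b) : phiH a b ≤ (a + b) * Real.log 2 := by
  have key : ∀ x w : ℝ, 0 ≤ x → x ≤ w → -(x * Real.log (x / w)) ≤ x * Real.log 2 + (w / 2 - x) := by
    intro x w hx hxw
    rcases hx.eq_or_lt with rfl | hx
    · simp; linarith
    have hw : 0 < w := by linarith
    have h := Real.log_le_sub_one_of_pos (show 0 < w / x / 2 by positivity)
    rw [Real.log_div (by positivity) (by norm_num), Real.log_div hw.ne' hx.ne'] at h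
    rw [Real.log_div hx.ne' hw.ne']
    have := mul_le_mul_of_nonneg_left h hx.le
    have e : x * (w / x / 2 - 1) = w / 2 - x := by field_simp
    rw [e] at this
    linarith
  rw [phiH_eq ha hb]
  linarith [key a (a+b) ha (by linarith), key b (a+b) hb (by linarith)]

lemma phiH_ge {a b : ℝ} (ha : 0 ≤ a) (hb : 0 ≤ b) :
    (a + b) * Real.log 2 - phiT a b ≤ phiH a b := by
  have key : ∀ x y : ℝ, 0 ≤ x → 0 ≤ y →
      x * Real.log (x / (x+y)) ≤ -(x * Real.log 2) + x * ((x - y) / (x + y)) := by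
    intro x y hx hy
    rcases hx.eq_or_lt with rfl | hx
    · simp
    have h := Real.log_le_sub_one_of_pos (show 0 < x / (x+y) * 2 by positivity)
    rw [Real.log_mul (by positivity) (by norm_num)] at h
    have e : x / (x + y) * 2 - 1 = (x - y) / (x + y) := by field_simp; ring
    rw [e] at h
    have := mul_le_mul_of_nonneg_left h hx.le
    linarith
  rw [phiH_eq ha hb]
  have h1 := key a b ha hb
  have h2 := key b a hb ha
  rw [add_comm b a] at h2
  have h3 : a * ((a - b) / (a + b)) + b * ((b - a) / (a + b)) ≤ phiT a b := by
    unfold phiT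
    rcases (add_nonneg ha hb).eq_or_lt with h | h
    · rw [← h]; simp
    · have e : a * ((a - b) / (a + b)) + b * ((b - a) / (a + b)) = (a-b) * ((a-b) / (a+b)) := by ring
      rw [e]
      refine (le_abs_self _).trans ?_
      rw [abs_mul]
      have : |(a - b) / (a + b)| ≤ 1 := by
        rw [abs_div, abs_of_pos h, div_le_one h, abs_le]; constructor <;> linarith
      nlinarith [abs_nonneg (a - b)]
  linarith

lemma phiH_le_phiZ {a b : ℝ} (ha : 0 ≤ a) (hb : 0 ≤ b) : phiH a b ≤ phiZ a b := by
  have key : ∀ x w : ℝ, 0 ≤ x → x ≤ w → -(x * Real.log (x / w)) ≤ 2 * (√x * √w - x) := by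
    intro x w hx hxw
    rcases hx.eq_or_lt with rfl | hx
    · simp
    have hw : 0 < w := by linarith
    have sx := Real.sqrt_pos.2 hx
    have sw := Real.sqrt_pos.2 hw
    have h := Real.log_le_sub_one_of_pos (show 0 < √w / √x by positivity)
    rw [Real.log_div sw.ne' sx.ne', Real.log_sqrt hw.le, Real.log_sqrt hx.le] at h
    rw [Real.log_div hx.ne' hw.ne']
    have := mul_le_mul_of_nonneg_left h hx.le
    have e : x * (√w / √x - 1) = √x * √w - x := by
      have := Real.sq_sqrt hx.le
      field_simp
      nlinarith
    rw [e] at this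
    linarith
  rw [phiH_eq ha hb]
  have h1 := key a (a+b) ha (by linarith)
  have h2 := key b (a+b) hb (by linarith)
  have h3 : (√a + √b) * √(a+b) ≤ (a + b) + √(a*b) := by
    rw [Real.sqrt_mul ha]
    have e1 := Real.sq_sqrt ha
    have e2 := Real.sq_sqrt hb
    have e3 := Real.sq_sqrt (add_nonneg ha hb)
    have n1 := Real.sqrt_nonneg a
    have n2 := Real.sqrt_nonneg b
    apply le_of_sq_le_sq _ (by positivity)
    rw [mul_pow, e3]
    have : (√a + √b)^2 = a + b + 2 * (√a * √b) := by rw [← e1, ← e2]; simp; ring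
    rw [this]
    nlinarith [sq_nonneg (√a * √b)]
  unfold phiZ
  nlinarith

section src
variable {S : Type*} [Fintype S] (f g : S → ℝ)

lemma src_sq (hf : ∀ s, 0 ≤ f s) (hg : ∀ s, 0 ≤ g s) (h1 : ∑ s, (f s + g s) = 1) :
    (∑ s, phiZ (f s) (g s)) ^ 2 + (∑ s, phiT (f s) (g s)) ^ 2 ≤ 1 := by
  have e : ∀ s, phiZ (f s) (g s) = √((f s + g s) - phiT (f s) (g s)) * √((f s + g s) + phiT (f s) (g s)) := by
    intro s
    have hT : phiT (f s) (g s) ≤ f s + g s := by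
      unfold phiT; rw [abs_le]; constructor <;> linarith [hf s, hg s]
    rw [← Real.sqrt_mul (by linarith)]
    unfold phiZ phiT
    have : (f s + g s - |f s - g s|) * (f s + g s + |f s - g s|) = 2 ^ 2 * (f s * g s) := by
      have := sq_abs (f s - g s)
      nlinarith
    rw [this, Real.sqrt_mul (x := 2 ^ 2) (by norm_num), Real.sqrt_sq (by norm_num)]
  have hT : ∀ s, phiT (f s) (g s) ≤ f s + g s := fun s => by
      unfold phiT; rw [abs_le]; constructor <;> linarith [hf s, hg s]
  have cs := Real.sum_sqrt_mul_sqrt_le (Finset.univ : Finset S)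
    (f := fun s => (f s + g s) - phiT (f s) (g s)) (g := fun s => (f s + g s) + phiT (f s) (g s))
    (fun s => by linarith [hT s]) (fun s => by linarith [hT s, hf s, hg s, phiT_nonneg (f s) (g s)])
  simp only [← e] at cs
  rw [Finset.sum_sub_distrib, Finset.sum_add_distrib (g := fun s => phiT (f s) (g s)), h1] at cs
  have hT1 : ∑ s, phiT (f s) (g s) ≤ 1 := by rw [← h1]; exact Finset.sum_le_sum fun s _ => hT s
  have hT0 : 0 ≤ ∑ s, phiT (f s) (g s) := Finset.sum_nonneg fun s _ => phiT_nonneg _ _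
  have hZ0 : 0 ≤ ∑ s, phiZ (f s) (g s) := Finset.sum_nonneg fun s _ => phiZ_nonneg _ _
  set T := ∑ s, phiT (f s) (g s)
  rw [← Real.sqrt_mul (by linarith)] at cs
  have := pow_le_pow_left₀ hZ0 cs 2
  rw [Real.sq_sqrt (by nlinarith)] at this
  nlinarith

lemma src_add (hf : ∀ s, 0 ≤ f s) (hg : ∀ s, 0 ≤ g s) (h1 : ∑ s, (f s + g s) = 1) :
    1 ≤ ∑ s, phiZ (f s) (g s) + ∑ s, phiT (f s) (g s) := by
  rw [← h1, ← Finset.sum_add_distrib]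
  refine Finset.sum_le_sum fun s _ => ?_
  unfold phiZ phiT
  have ha := hf s
  have hb := hg s
  rcases le_total (f s) (g s) with h | h
  · have : f s ≤ √(f s * g s) := Real.le_sqrt_of_sq_le (by nlinarith)
    rw [abs_of_nonpos (by linarith)]; linarith
  · have : g s ≤ √(f s * g s) := Real.le_sqrt_of_sq_le (by nlinarith)
    rw [abs_of_nonneg (by linarith)]; linarith

lemma src_bil (h1 : ∑ s, (f s + g s) = 1) (φ : ℝ → ℝ → ℝ) :
   ∑ s, ∑ t, ((f s + g s) * φ (f t) (g t) + (f t + g t) * φ (f s) (g s))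
     = 2 * ∑ s, φ (f s) (g s) := by
  simp only [Finset.sum_add_distrib, ← Finset.mul_sum, ← Finset.sum_mul]
  rw [Finset.sum_add_distrib] at h1
  rw [h1]; ring

lemma src_mul (φ : ℝ → ℝ → ℝ) :
   ∑ s, ∑ t, (φ (f s) (g s) * φ (f t) (g t)) = (∑ s, φ (f s) (g s)) ^ 2 := by
  rw [sq, Finset.sum_mul_sum]

end src

lemma phiH_nonneg {a b : ℝ} (ha : 0 ≤ a) (hb : 0 ≤ b) : 0 ≤ phiH a b := by
  rw [phiH_eq ha hb]
  have h1 := Real.log_nonpos (div_nonneg ha (add_nonneg ha hb))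
    (div_le_one_of_le₀ (by linarith : a ≤ a + b) (add_nonneg ha hb))
  have h2 := Real.log_nonpos (div_nonneg hb (add_nonneg ha hb))
    (div_le_one_of_le₀ (by linarith : b ≤ a + b) (add_nonneg ha hb))
  nlinarith

def hiE (n : ℕ) : Fin 2 × Fin (2 ^ n) ≃ Fin (2 ^ (n + 1)) :=
  finProdFinEquiv.trans (finCongr (by rw [pow_succ, Nat.mul_comm]))
def loE (n : ℕ) : Fin (2 ^ n) × Fin 2 ≃ Fin (2 ^ (n + 1)) :=
  finProdFinEquiv.trans (finCongr (by rw [pow_succ]))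

lemma hiE_val (n : ℕ) (a : Fin 2) (i : Fin (2 ^ n)) : (hiE n (a, i)).val = i.val + 2 ^ n * a.val := rfl
lemma loE_val (n : ℕ) (i : Fin (2 ^ n)) (b : Fin 2) : (loE n (i, b)).val = b.val + 2 * i.val := rfl

lemma br_hiE (n : ℕ) (a : Fin 2) (i : Fin (2 ^ n)) : br (n + 1) (hiE n (a, i)) = loE n (br n i, a) := by
  simp [br, hiE, loE]

lemma Fpow_hiE (n : ℕ) (a b : Fin 2) (i j : Fin (2 ^ n)) :
    Fpow (n + 1) (hiE n (a, i)) (hiE n (b, j)) = Fker a b * Fpow n i j := by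
  simp only [Fpow, hiE, Matrix.reindex_apply, Matrix.submatrix_apply, Matrix.kroneckerMap_apply,
    Equiv.symm_apply_apply]

lemma lo_hi (n : ℕ) (a b : Fin 2) (i : Fin (2 ^ n)) :
    loE (n + 1) (hiE n (a, i), b) = hiE (n + 1) (a, loE n (i, b)) := by
  apply Fin.ext
  simp only [hiE_val, loE_val, pow_succ]; ring

lemma Fpow_loE (n : ℕ) (a b : Fin 2) (i j : Fin (2 ^ n)) :
    Fpow (n + 1) (loE n (i, a)) (loE n (j, b)) = Fpow n i j * Fker a b := by
  induction n with
  | zero =>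
    have h : ∀ (i : Fin (2 ^ 0)) (a : Fin 2), loE 0 (i, a) = hiE 0 (a, i) := by
      intro i a
      apply Fin.ext
      have := i.isLt
      simp only [hiE_val, loE_val]; omega
    rw [h, h, Fpow_hiE, mul_comm]
  | succ n ih =>
    obtain ⟨⟨a', i'⟩, rfl⟩ := (hiE n).surjective i
    obtain ⟨⟨b', j'⟩, rfl⟩ := (hiE n).surjective j
    rw [lo_hi, lo_hi, Fpow_hiE, ih, Fpow_hiE, mul_assoc]

lemma polarU_loE (n : ℕ) (x : Fin (2 ^ (n + 1)) → ZMod 2) (j : Fin (2 ^ n)) (b : Fin 2) :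
    polarU (n + 1) x (loE n (j, b)) = ∑ a, polarU n (fun i => x (hiE n (a, i))) j * Fker a b := by
  unfold polarU
  rw [← (hiE n).sum_comp, Fintype.sum_prod_type]
  refine Finset.sum_congr rfl fun a _ => ?_
  rw [Finset.sum_mul]
  refine Finset.sum_congr rfl fun i _ => ?_
  rw [br_hiE, Fpow_loE, mul_assoc]

lemma polarU_0 (n : ℕ) (x : Fin (2 ^ (n + 1)) → ZMod 2) (j : Fin (2 ^ n)) :
    polarU (n + 1) x (loE n (j, 0)) = polarU n (fun i => x (hiE n (0, i))) j
      + polarU n (fun i => x (hiE n (1, i))) j := by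
  rw [polarU_loE, Fin.sum_univ_two]; simp [Fker]

lemma polarU_1 (n : ℕ) (x : Fin (2 ^ (n + 1)) → ZMod 2) (j : Fin (2 ^ n)) :
    polarU (n + 1) x (loE n (j, 1)) = polarU n (fun i => x (hiE n (1, i))) j := by
  rw [polarU_loE, Fin.sum_univ_two]; simp [Fker]

/-- splitting a vector into its halves -/
def splitE (n : ℕ) (A : Type*) : (Fin (2 ^ (n + 1)) → A) ≃ (Fin (2 ^ n) → A) × (Fin (2 ^ n) → A) where
  toFun x := (fun i => x (hiE n (0, i)), fun i => x (hiE n (1, i)))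
  invFun z k := if ((hiE n).symm k).1 = 0 then z.1 ((hiE n).symm k).2 else z.2 ((hiE n).symm k).2
  left_inv x := by
    funext k
    obtain ⟨⟨a, i⟩, rfl⟩ := (hiE n).surjective k
    simp only [Equiv.symm_apply_apply]
    fin_cases a <;> simp
  right_inv z := by
    simp

abbrev Pre (n : ℕ) (j : Fin (2 ^ n)) := {i : Fin (2 ^ n) // i < j} → ZMod 2

lemma lo_lt {n : ℕ} {i j : Fin (2 ^ n)} (h : i < j) (b c : Fin 2) : loE n (i, b) < loE n (j, c) := by
  rw [Fin.lt_def] at *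
  rw [loE_val, loE_val]; omega

lemma lt_of_lo {n : ℕ} {i j : Fin (2 ^ n)} {b : Fin 2} (h : loE n (i, b) < loE n (j, 0)) : i < j := by
  rw [Fin.lt_def] at *
  rw [loE_val, loE_val] at h; simp at h; omega

lemma lt_of_lo1 {n : ℕ} {i j : Fin (2 ^ n)} (h : loE n (i, 1) < loE n (j, 1)) : i < j := by
  rw [Fin.lt_def] at *
  rw [loE_val, loE_val] at h; omega

lemma le_of_lo1 {n : ℕ} {i j : Fin (2 ^ n)} (h : loE n (i, 0) < loE n (j, 1)) : i < j ∨ i = j := by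
  rw [Fin.lt_def, Fin.ext_iff] at *
  rw [loE_val, loE_val] at h; simp at h; omega

lemma z2 (a b : ZMod 2) : a + b + b = a := by
  rw [add_assoc, CharTwo.add_self_eq_zero, add_zero]

def preE0 (n : ℕ) (j : Fin (2 ^ n)) : Pre (n + 1) (loE n (j, 0)) ≃ Pre n j × Pre n j where
  toFun r := (fun i => r ⟨loE n (i.1, 0), lo_lt i.2 _ _⟩ + r ⟨loE n (i.1, 1), lo_lt i.2 _ _⟩,
    fun i => r ⟨loE n (i.1, 1), lo_lt i.2 _ _⟩)
  invFun z k :=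
    have h : ((loE n).symm k.1).1 < j := lt_of_lo (b := ((loE n).symm k.1).2) (by simpa using k.2)
    if ((loE n).symm k.1).2 = 0 then z.1 ⟨_, h⟩ + z.2 ⟨_, h⟩ else z.2 ⟨_, h⟩
  left_inv r := by
    funext ⟨k, hk⟩
    obtain ⟨⟨i, b⟩, rfl⟩ := (loE n).surjective k
    simp only [Equiv.symm_apply_apply]
    fin_cases b <;> simp [z2]
  right_inv z := by
    ext i <;> simp [z2]

def preE1 (n : ℕ) (j : Fin (2 ^ n)) :
    Pre (n + 1) (loE n (j, 1)) ≃ (Pre n j × Pre n j) × ZMod 2 where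
  toFun r := ((fun i => r ⟨loE n (i.1, 0), lo_lt i.2 _ _⟩ + r ⟨loE n (i.1, 1), lo_lt i.2 _ _⟩,
    fun i => r ⟨loE n (i.1, 1), lo_lt i.2 _ _⟩), r ⟨loE n (j, 0), by
      rw [Fin.lt_def, loE_val, loE_val]; simp⟩)
  invFun z k :=
    if h : ((loE n).symm k.1).1 < j then
    if ((loE n).symm k.1).2 = 0 then z.1.1 ⟨_, h⟩ + z.1.2 ⟨_, h⟩ else z.1.2 ⟨_, h⟩
    else z.2
  left_inv r := by
    funext ⟨k, hk⟩
    obtain ⟨⟨i, b⟩, rfl⟩ := (loE n).surjective k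
    simp only [Equiv.symm_apply_apply]
    fin_cases b
    · by_cases h : i < j
      · simp [z2, h]
      · have : i = j := (le_of_lo1 hk).resolve_left h
        subst this
        simp
    · have := lt_of_lo1 hk
      simp [this]
  right_inv z := by
    ext i
    · have := i.2
      simp [z2, this]
    · have := i.2
      simp [this]
    · simp

section aux
variable {Y : Type*} [Fintype Y]

lemma prUY_eq (n : ℕ) (p : ZMod 2 × Y → ℝ) (j : Fin (2 ^ n)) (u : ZMod 2) (r : Pre n j)
    (y : Fin (2 ^ n) → Y) :
    prUY n p j u r y = ∑ x : Fin (2 ^ n) → ZMod 2,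
      if (polarU n x j = u ∧ ∀ i : {i : Fin (2 ^ n) // i < j}, polarU n x i = r i)
      then ∏ i, p (x i, y i) else 0 := by
  unfold prUY; rw [Finset.sum_filter]

lemma prod_split (n : ℕ) (p : ZMod 2 × Y → ℝ) (x : Fin (2 ^ (n + 1)) → ZMod 2)
    (y : Fin (2 ^ (n + 1)) → Y) :
    ∏ i, p (x i, y i) = (∏ i, p ((splitE n _ x).1 i, (splitE n _ y).1 i)) *
      ∏ i, p ((splitE n _ x).2 i, (splitE n _ y).2 i) := by
  rw [← (hiE n).prod_comp, Fintype.prod_prod_type, Fin.prod_univ_two]; rfl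

lemma pre0_iff (n : ℕ) (j : Fin (2 ^ n)) (x : Fin (2 ^ (n + 1)) → ZMod 2)
    (r : Pre (n + 1) (loE n (j, 0))) :
    (∀ i : {i : Fin (2 ^ (n+1)) // i < loE n (j, 0)}, polarU (n + 1) x i = r i) ↔
    (∀ i : {i // i < j}, polarU n (splitE n _ x).1 i = (preE0 n j r).1 i) ∧
    (∀ i : {i // i < j}, polarU n (splitE n _ x).2 i = (preE0 n j r).2 i) := by
  constructor
  · intro h
    have h1 : ∀ i : {i // i < j}, polarU n (splitE n _ x).2 i = (preE0 n j r).2 i := by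
      intro i
      have := h ⟨loE n (i.1, 1), lo_lt i.2 _ _⟩
      rw [polarU_1] at this
      exact this
    refine ⟨fun i => ?_, h1⟩
    have := h ⟨loE n (i.1, 0), lo_lt i.2 _ _⟩
    rw [polarU_0] at this
    have h2 := h1 i
    simp only [preE0, splitE, Equiv.coe_fn_mk] at h2 ⊢
    rw [← this, h2.symm, z2]
  · rintro ⟨h0, h1⟩ ⟨k, hk⟩
    obtain ⟨⟨i, b⟩, rfl⟩ := (loE n).surjective k
    have hi := lt_of_lo hk
    have e0 := h0 ⟨i, hi⟩
    have e1 := h1 ⟨i, hi⟩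
    simp only [preE0, splitE, Equiv.coe_fn_mk] at e0 e1
    fin_cases b
    · simp only [Fin.zero_eta]
      rw [polarU_0, e0, e1, z2]
    · simp only [Fin.mk_one]
      rw [polarU_1, e1]

lemma pre1_iff (n : ℕ) (j : Fin (2 ^ n)) (x : Fin (2 ^ (n + 1)) → ZMod 2)
    (r : Pre (n + 1) (loE n (j, 1))) :
    (∀ i : {i : Fin (2 ^ (n+1)) // i < loE n (j, 1)}, polarU (n + 1) x i = r i) ↔
    ((∀ i : {i // i < j}, polarU n (splitE n _ x).1 i = (preE1 n j r).1.1 i) ∧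
    (∀ i : {i // i < j}, polarU n (splitE n _ x).2 i = (preE1 n j r).1.2 i)) ∧
    polarU n (splitE n _ x).1 j + polarU n (splitE n _ x).2 j = (preE1 n j r).2 := by
  constructor
  · intro h
    have h1 : ∀ i : {i // i < j}, polarU n (splitE n _ x).2 i = (preE1 n j r).1.2 i := by
      intro i
      have := h ⟨loE n (i.1, 1), lo_lt i.2 _ _⟩
      rw [polarU_1] at this
      exact this
    refine ⟨⟨fun i => ?_, h1⟩, ?_⟩
    · have := h ⟨loE n (i.1, 0), lo_lt i.2 _ _⟩
      rw [polarU_0] at this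
      have h2 := h1 i
      simp only [preE1, splitE, Equiv.coe_fn_mk] at h2 ⊢
      rw [← this, h2.symm, z2]
    · have := h ⟨loE n (j, 0), by rw [Fin.lt_def, loE_val, loE_val]; simp⟩
      rw [polarU_0] at this
      exact this
  · rintro ⟨⟨h0, h1⟩, h2⟩ ⟨k, hk⟩
    obtain ⟨⟨i, b⟩, rfl⟩ := (loE n).surjective k
    by_cases hi : i < j
    · have e0 := h0 ⟨i, hi⟩
      have e1 := h1 ⟨i, hi⟩
      simp only [preE1, splitE, Equiv.coe_fn_mk] at e0 e1
      fin_cases b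
      · simp only [Fin.zero_eta]
        rw [polarU_0, e0, e1, z2]
      · simp only [Fin.mk_one]
        rw [polarU_1, e1]
    · fin_cases b
      · have : i = j := (le_of_lo1 hk).resolve_left hi
        subst this
        simp only [Fin.zero_eta]
        rw [polarU_0]
        exact h2
      · exact absurd (lt_of_lo1 hk) hi

lemma prUY_minus (n : ℕ) (p : ZMod 2 × Y → ℝ) (j : Fin (2 ^ n)) (u : ZMod 2)
    (r : Pre (n + 1) (loE n (j, 0))) (y : Fin (2 ^ (n + 1)) → Y) :
    prUY (n + 1) p (loE n (j, 0)) u r y =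
      ∑ v, prUY n p j (u + v) (preE0 n j r).1 (splitE n _ y).1 *
        prUY n p j v (preE0 n j r).2 (splitE n _ y).2 := by
  rw [prUY_eq]
  simp only [prUY_eq n]
  simp only [Finset.sum_mul_sum]
  rw [← (splitE n _).symm.sum_comp, Fintype.sum_prod_type, Finset.sum_comm]
  rw [Finset.sum_comm]
  rw [Finset.sum_comm]
  conv_rhs => rw [Finset.sum_comm]
  conv_rhs => enter [2, x]; rw [Finset.sum_comm]
  rw [Finset.sum_comm]
  refine Finset.sum_congr rfl fun x' _ => Finset.sum_congr rfl fun x'' _ => ?_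
  simp only [prod_split, pre0_iff, polarU_0]
  have e : (splitE n (ZMod 2)) ((splitE n (ZMod 2)).symm (x', x'')) = (x', x'') := by simp
  have e1 : (fun i => (splitE n (ZMod 2)).symm (x', x'') (hiE n (0, i))) = x' := congrArg Prod.fst e
  have e2 : (fun i => (splitE n (ZMod 2)).symm (x', x'') (hiE n (1, i))) = x'' := congrArg Prod.snd e
  rw [e, e1, e2]
  rw [Finset.sum_eq_single (polarU n x'' j)]
  · have hu : polarU n x' j + polarU n x'' j = u ↔ polarU n x' j = u + polarU n x'' j := by
      constructor
      · rintro rfl; rw [z2]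
      · intro h; rw [h, z2]
    simp only [hu]
    split_ifs <;> simp_all
  · intro v _ hv
    rw [if_neg (c := (polarU n x'' j = v ∧ _)) (fun h => hv h.1.symm), mul_zero]
  · simp

lemma prUY_plus (n : ℕ) (p : ZMod 2 × Y → ℝ) (j : Fin (2 ^ n)) (v : ZMod 2)
    (r : Pre (n + 1) (loE n (j, 1))) (y : Fin (2 ^ (n + 1)) → Y) :
    prUY (n + 1) p (loE n (j, 1)) v r y =
      prUY n p j ((preE1 n j r).2 + v) (preE1 n j r).1.1 (splitE n _ y).1 *
        prUY n p j v (preE1 n j r).1.2 (splitE n _ y).2 := by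
  rw [prUY_eq]
  simp only [prUY_eq n]
  simp only [Finset.sum_mul_sum]
  rw [← (splitE n _).symm.sum_comp, Fintype.sum_prod_type]
  refine Finset.sum_congr rfl fun x' _ => Finset.sum_congr rfl fun x'' _ => ?_
  simp only [prod_split, pre1_iff, polarU_1]
  have e : (splitE n (ZMod 2)) ((splitE n (ZMod 2)).symm (x', x'')) = (x', x'') := by simp
  have e2 : (fun i => (splitE n (ZMod 2)).symm (x', x'') (hiE n (1, i))) = x'' := congrArg Prod.snd e
  rw [e, e2]
  have hu : polarU n x' j + polarU n x'' j = (preE1 n j r).2 ↔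
      polarU n x' j = (preE1 n j r).2 + polarU n x'' j := by
    constructor
    · intro h; rw [← h, z2]
    · intro h; rw [h, z2]
  rw [ite_zero_mul_ite_zero]
  refine if_congr ?_ rfl rfl
  rw [hu]
  constructor
  · rintro ⟨h1, ⟨h2, h3⟩, h4⟩
    exact ⟨⟨by rw [h4, h1], h2⟩, h1, h3⟩
  · rintro ⟨⟨h4, h2⟩, h1, h3⟩
    exact ⟨h1, ⟨h2, h3⟩, by rw [h4, h1]⟩

/-- general functional -/
noncomputable def Fn (φ : ℝ → ℝ → ℝ) (n : ℕ) (p : ZMod 2 × Y → ℝ) (j : Fin (2 ^ n)) : ℝ :=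
  ∑ s : Pre n j × (Fin (2 ^ n) → Y), φ (prUY n p j 0 s.1 s.2) (prUY n p j 1 s.1 s.2)

def reshuf (A B C D : Type*) : (A × B) × (C × D) ≃ (A × C) × (B × D) where
  toFun z := ((z.1.1, z.2.1), (z.1.2, z.2.2))
  invFun z := ((z.1.1, z.2.1), (z.1.2, z.2.2))

def reshuf1 (A B C D E : Type*) : ((A × B) × C) × (D × E) ≃ ((A × D) × (B × E)) × C where
  toFun z := (((z.1.1.1, z.2.1), (z.1.1.2, z.2.2)), z.1.2)
  invFun z := (((z.1.1.1, z.1.2.1), z.2), (z.1.1.2, z.1.2.2))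

lemma Fn_minus (φ : ℝ → ℝ → ℝ) (n : ℕ) (p : ZMod 2 × Y → ℝ) (j : Fin (2 ^ n)) :
    Fn φ (n + 1) p (loE n (j, 0)) =
    ∑ s : Pre n j × (Fin (2 ^ n) → Y), ∑ t : Pre n j × (Fin (2 ^ n) → Y),
      φ (prUY n p j 0 s.1 s.2 * prUY n p j 0 t.1 t.2 + prUY n p j 1 s.1 s.2 * prUY n p j 1 t.1 t.2)
        (prUY n p j 1 s.1 s.2 * prUY n p j 0 t.1 t.2 + prUY n p j 0 s.1 s.2 * prUY n p j 1 t.1 t.2) := by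
  rw [← Fintype.sum_prod_type']
  unfold Fn
  refine Fintype.sum_equiv (((preE0 n j).prodCongr (splitE n Y)).trans (reshuf _ _ _ _)) _ _ ?_
  rintro ⟨r, y⟩
  have hs : ∀ f : ZMod 2 → ℝ, ∑ v, f v = f 0 + f 1 := fun f => Fin.sum_univ_two f
  rw [prUY_minus, prUY_minus, hs, hs]
  simp [reshuf, show (1 : ZMod 2) + 1 = 0 from rfl]

lemma Fn_plus (φ : ℝ → ℝ → ℝ) (n : ℕ) (p : ZMod 2 × Y → ℝ) (j : Fin (2 ^ n)) :
    Fn φ (n + 1) p (loE n (j, 1)) =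
    ∑ s : Pre n j × (Fin (2 ^ n) → Y), ∑ t : Pre n j × (Fin (2 ^ n) → Y),
      (φ (prUY n p j 0 s.1 s.2 * prUY n p j 0 t.1 t.2) (prUY n p j 1 s.1 s.2 * prUY n p j 1 t.1 t.2)
      + φ (prUY n p j 1 s.1 s.2 * prUY n p j 0 t.1 t.2)
        (prUY n p j 0 s.1 s.2 * prUY n p j 1 t.1 t.2)) := by
  rw [← Fintype.sum_prod_type']
  have hs : ∀ f : ZMod 2 → ℝ, ∑ v, f v = f 0 + f 1 := fun f => Fin.sum_univ_two f
  have h2 : ∀ s t : Pre n j × (Fin (2 ^ n) → Y),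
      (φ (prUY n p j 0 s.1 s.2 * prUY n p j 0 t.1 t.2) (prUY n p j 1 s.1 s.2 * prUY n p j 1 t.1 t.2)
      + φ (prUY n p j 1 s.1 s.2 * prUY n p j 0 t.1 t.2)
        (prUY n p j 0 s.1 s.2 * prUY n p j 1 t.1 t.2)) =
      ∑ u : ZMod 2, φ (prUY n p j u s.1 s.2 * prUY n p j 0 t.1 t.2)
        (prUY n p j (u + 1) s.1 s.2 * prUY n p j 1 t.1 t.2) := by
    intro s t
    rw [hs, zero_add, show (1 : ZMod 2) + 1 = 0 from rfl]
  simp only [h2]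
  rw [← Fintype.sum_prod_type']
  unfold Fn
  refine Fintype.sum_equiv (((preE1 n j).prodCongr (splitE n Y)).trans (reshuf1 _ _ _ _ _)) _ _ ?_
  rintro ⟨r, y⟩
  rw [prUY_plus, prUY_plus]
  simp [reshuf1]

lemma polarU_zero (x : Fin (2 ^ 0) → ZMod 2) (j : Fin (2 ^ 0)) : polarU 0 x j = x 0 := by
  have hs : ∀ a b : Fin (2 ^ 0), a = b := fun a b => Subsingleton.elim (α := Fin 1) a b
  refine (Fintype.sum_eq_single (0 : Fin (2 ^ 0)) (fun k hk => absurd (hs _ _) hk)).trans ?_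
  have h1 : Fpow 0 (br 0 0) j = 1 := by
    rw [hs (br 0 0) j]
    exact Matrix.one_apply_eq j
  rw [h1, mul_one]

lemma prUY_zero (p : ZMod 2 × Y → ℝ) (j : Fin (2 ^ 0)) (u : ZMod 2) (r : Pre 0 j)
    (y : Fin (2 ^ 0) → Y) : prUY 0 p j u r y = p (u, y 0) := by
  have hj : j = 0 := Subsingleton.elim (α := Fin 1) _ _
  subst hj
  rw [prUY_eq]
  rw [Fintype.sum_eq_single (fun _ => u)]
  · rw [if_pos]
    · exact Fintype.prod_eq_single (f := fun i : Fin (2 ^ 0) => p (u, y i)) 0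
        (fun k hk => absurd (Subsingleton.elim (α := Fin 1) _ _) hk)
    · exact ⟨polarU_zero _ _, fun i => absurd i.2 (Fin.not_lt_zero _)⟩
  · intro x hx
    rw [if_neg]
    rintro ⟨h, -⟩
    apply hx
    funext k
    rw [← h, polarU_zero]
    congr 1
    exact Subsingleton.elim (α := Fin 1) _ _

lemma Fn_zero (φ : ℝ → ℝ → ℝ) (p : ZMod 2 × Y → ℝ) (j : Fin (2 ^ 0)) :
    Fn φ 0 p j = ∑ y, φ (p (0, y)) (p (1, y)) := by
  have hj : j = 0 := Subsingleton.elim (α := Fin 1) _ _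
  subst hj
  unfold Fn
  simp only [prUY_zero]
  rw [Fintype.sum_prod_type]
  have : IsEmpty {i : Fin (2 ^ 0) // i < 0} := ⟨fun i => absurd i.2 (Fin.not_lt_zero _)⟩
  rw [Fintype.sum_unique]
  exact Fintype.sum_equiv (Equiv.funUnique (Fin 1) Y) _ _ (fun y => rfl)

lemma prUY_nonneg (n : ℕ) (p : ZMod 2 × Y → ℝ) (hp : ∀ z, 0 ≤ p z) (j : Fin (2 ^ n)) (u : ZMod 2)
    (r : Pre n j) (y : Fin (2 ^ n) → Y) : 0 ≤ prUY n p j u r y :=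
  Finset.sum_nonneg fun _ _ => Finset.prod_nonneg fun _ _ => hp _

lemma Zcond_eq (n : ℕ) (p : ZMod 2 × Y → ℝ) (j : Fin (2 ^ n)) : Zcond n p j = Fn phiZ n p j := by
  unfold Zcond Fn phiZ
  rw [Fintype.sum_prod_type, Finset.mul_sum]
  simp only [Finset.mul_sum]

lemma Fn_sum_one (n : ℕ) (p : ZMod 2 × Y → ℝ) (hsum : ∑ z, p z = 1) (j : Fin (2 ^ n)) :
    Fn (fun a b => a + b) n p j = 1 := by
  induction n with
  | zero =>
    rw [Fn_zero, ← hsum, Fintype.sum_prod_type_right]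
    exact Finset.sum_congr rfl fun y _ => (Fin.sum_univ_two (fun x => p (x, y))).symm
  | succ n ih =>
    obtain ⟨⟨i, b⟩, rfl⟩ := (loE n).surjective j
    have := ih i
    have h2 : ∑ s : Pre n i × (Fin (2 ^ n) → Y), ∑ t : Pre n i × (Fin (2 ^ n) → Y),
       ((prUY n p i 0 s.1 s.2 + prUY n p i 1 s.1 s.2) * (prUY n p i 0 t.1 t.2 + prUY n p i 1 t.1 t.2)) = 1 := by
      rw [← Finset.sum_mul_sum]
      unfold Fn at this
      rw [this, one_mul]
    fin_cases b
    · simp only [Fin.zero_eta]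
      rw [Fn_minus, ← h2]
      exact Finset.sum_congr rfl fun s _ => Finset.sum_congr rfl fun t _ => by ring
    · simp only [Fin.mk_one]
      rw [Fn_plus, ← h2]
      exact Finset.sum_congr rfl fun s _ => Finset.sum_congr rfl fun t _ => by ring

section rel

lemma rel_Z_nonneg (n : ℕ) (p : ZMod 2 × Y → ℝ) (j : Fin (2 ^ n)) : 0 ≤ Fn phiZ n p j := Finset.sum_nonneg fun _ _ => phiZ_nonneg _ _
lemma rel_T_nonneg (n : ℕ) (p : ZMod 2 × Y → ℝ) (j : Fin (2 ^ n)) : 0 ≤ Fn phiT n p j := Finset.sum_nonneg fun _ _ => phiT_nonneg _ _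
lemma rel_Z_plus (n : ℕ) (p : ZMod 2 × Y → ℝ) (hp : ∀ z, 0 ≤ p z) (j : Fin (2 ^ n)) : Fn phiZ (n + 1) p (loE n (j, 1)) = Fn phiZ n p j ^ 2 := by
  rw [Fn_plus]
  unfold Fn
  rw [← src_mul]
  exact Finset.sum_congr rfl fun s _ => Finset.sum_congr rfl fun t _ =>
    phiZ_plus (prUY_nonneg n p hp _ _ _ _) (prUY_nonneg n p hp _ _ _ _)
lemma rel_Z_minus (n : ℕ) (p : ZMod 2 × Y → ℝ) (hp : ∀ z, 0 ≤ p z) (hsum : ∑ z, p z = 1) (j : Fin (2 ^ n)) : Fn phiZ (n + 1) p (loE n (j, 0)) ≤ 2 * Fn phiZ n p j - Fn phiZ n p j ^ 2 := by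
  rw [Fn_minus]
  unfold Fn
  rw [← src_mul, ← src_bil _ _ (Fn_sum_one n p hsum j), ← Finset.sum_sub_distrib]
  simp only [← Finset.sum_sub_distrib]
  exact Finset.sum_le_sum fun s _ => Finset.sum_le_sum fun t _ =>
    phiZ_minus (prUY_nonneg n p hp _ _ _ _) (prUY_nonneg n p hp _ _ _ _)
     (prUY_nonneg n p hp _ _ _ _) (prUY_nonneg n p hp _ _ _ _)
lemma rel_T_minus (n : ℕ) (p : ZMod 2 × Y → ℝ) (j : Fin (2 ^ n)) : Fn phiT (n + 1) p (loE n (j, 0)) = Fn phiT n p j ^ 2 := by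
  rw [Fn_minus]
  unfold Fn
  rw [← src_mul]
  exact Finset.sum_congr rfl fun s _ => Finset.sum_congr rfl fun t _ => phiT_minus _ _ _ _
lemma rel_T_plus (n : ℕ) (p : ZMod 2 × Y → ℝ) (hp : ∀ z, 0 ≤ p z) (hsum : ∑ z, p z = 1) (j : Fin (2 ^ n)) : Fn phiT (n + 1) p (loE n (j, 1)) ≤ 2 * Fn phiT n p j - Fn phiT n p j ^ 2 := by
  rw [Fn_plus]
  unfold Fn
  rw [← src_mul, ← src_bil _ _ (Fn_sum_one n p hsum j), ← Finset.sum_sub_distrib]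
  simp only [← Finset.sum_sub_distrib]
  exact Finset.sum_le_sum fun s _ => Finset.sum_le_sum fun t _ =>
    phiT_plus (prUY_nonneg n p hp _ _ _ _) (prUY_nonneg n p hp _ _ _ _)
     (prUY_nonneg n p hp _ _ _ _) (prUY_nonneg n p hp _ _ _ _)
lemma rel_H (n : ℕ) (p : ZMod 2 × Y → ℝ) (hsum : ∑ z, p z = 1) (j : Fin (2 ^ n)) : Fn phiH (n + 1) p (loE n (j, 0)) + Fn phiH (n + 1) p (loE n (j, 1))
    = 2 * Fn phiH n p j := by
  rw [Fn_plus, Fn_minus]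
  unfold Fn
  rw [← src_bil _ _ (Fn_sum_one n p hsum j), ← Finset.sum_add_distrib]
  simp only [← Finset.sum_add_distrib]
  exact Finset.sum_congr rfl fun s _ => Finset.sum_congr rfl fun t _ => phiH_chain _ _ _ _
lemma rel_sq (n : ℕ) (p : ZMod 2 × Y → ℝ) (hp : ∀ z, 0 ≤ p z) (hsum : ∑ z, p z = 1) (j : Fin (2 ^ n)) : Fn phiZ n p j ^ 2 + Fn phiT n p j ^ 2 ≤ 1 :=
  src_sq _ _ (fun _ => prUY_nonneg n p hp _ _ _ _) (fun _ => prUY_nonneg n p hp _ _ _ _)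
    (Fn_sum_one n p hsum j)
lemma rel_add (n : ℕ) (p : ZMod 2 × Y → ℝ) (hp : ∀ z, 0 ≤ p z) (hsum : ∑ z, p z = 1) (j : Fin (2 ^ n)) : 1 ≤ Fn phiZ n p j + Fn phiT n p j :=
  src_add _ _ (fun _ => prUY_nonneg n p hp _ _ _ _) (fun _ => prUY_nonneg n p hp _ _ _ _)
    (Fn_sum_one n p hsum j)
lemma rel_HZ (n : ℕ) (p : ZMod 2 × Y → ℝ) (hp : ∀ z, 0 ≤ p z) (j : Fin (2 ^ n)) : Fn phiH n p j ≤ Fn phiZ n p j :=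
  Finset.sum_le_sum fun _ _ => phiH_le_phiZ (prUY_nonneg n p hp _ _ _ _) (prUY_nonneg n p hp _ _ _ _)
lemma rel_H_le (n : ℕ) (p : ZMod 2 × Y → ℝ) (hp : ∀ z, 0 ≤ p z) (hsum : ∑ z, p z = 1) (j : Fin (2 ^ n)) : Fn phiH n p j ≤ Real.log 2 := by
  have h := Fn_sum_one n p hsum j
  calc Fn phiH n p j ≤ Fn (fun a b => a + b) n p j * Real.log 2 := by
        unfold Fn
        rw [Finset.sum_mul]
        exact Finset.sum_le_sum fun _ _ => phiH_le_log (prUY_nonneg n p hp _ _ _ _)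
          (prUY_nonneg n p hp _ _ _ _)
    _ = _ := by rw [h, one_mul]
lemma rel_H_ge (n : ℕ) (p : ZMod 2 × Y → ℝ) (hp : ∀ z, 0 ≤ p z) (hsum : ∑ z, p z = 1) (j : Fin (2 ^ n)) : Real.log 2 - Fn phiT n p j ≤ Fn phiH n p j := by
  have h := Fn_sum_one n p hsum j
  calc _ = Fn (fun a b => a + b) n p j * Real.log 2 - Fn phiT n p j := by rw [h, one_mul]
    _ ≤ _ := by
        unfold Fn
        rw [Finset.sum_mul, ← Finset.sum_sub_distrib]
        exact Finset.sum_le_sum fun _ _ => phiH_ge (prUY_nonneg n p hp _ _ _ _)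
          (prUY_nonneg n p hp _ _ _ _)
end rel

/-- natural-number indexed version of `Fn` -/
noncomputable def NF (φ : ℝ → ℝ → ℝ) (p : ZMod 2 × Y → ℝ) (n j : ℕ) : ℝ :=
  if h : j < 2 ^ n then Fn φ n p ⟨j, h⟩ else 0

lemma NF_lt (φ : ℝ → ℝ → ℝ) (p : ZMod 2 × Y → ℝ) (n j : ℕ) (h : j < 2 ^ n) :
    NF φ p n j = Fn φ n p ⟨j, h⟩ := dif_pos h

lemma NF_even (φ : ℝ → ℝ → ℝ) (p : ZMod 2 × Y → ℝ) (n j : ℕ) (h : j < 2 ^ n) :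
    NF φ p (n + 1) (2 * j) = Fn φ (n + 1) p (loE n (⟨j, h⟩, 0)) := by
  have h' : 2 * j < 2 ^ (n + 1) := by rw [pow_succ]; omega
  rw [NF_lt _ _ _ _ h']
  congr 1
  apply Fin.ext
  rw [loE_val]; simp

lemma NF_odd (φ : ℝ → ℝ → ℝ) (p : ZMod 2 × Y → ℝ) (n j : ℕ) (h : j < 2 ^ n) :
    NF φ p (n + 1) (2 * j + 1) = Fn φ (n + 1) p (loE n (⟨j, h⟩, 1)) := by
  have h' : 2 * j + 1 < 2 ^ (n + 1) := by rw [pow_succ]; omega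
  rw [NF_lt _ _ _ _ h']
  congr 1
  apply Fin.ext
  rw [loE_val]; simp; omega

lemma NF_Pol (p : ZMod 2 × Y → ℝ) (hp : ∀ z, 0 ≤ p z) (hsum : ∑ z, p z = 1) :
    Pol (NF phiZ p) (NF phiT p) (NF phiH p) where
  Z0 n j h := by rw [NF_lt _ _ _ _ h]; exact rel_Z_nonneg _ _ _
  T0 n j h := by rw [NF_lt _ _ _ _ h]; exact rel_T_nonneg _ _ _
  sq n j h := by simp only [NF_lt _ _ _ _ h]; exact rel_sq _ _ hp hsum _
  add n j h := by simp only [NF_lt _ _ _ _ h]; exact rel_add _ _ hp hsum _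
  Zp n j h := by rw [NF_odd _ _ _ _ h, NF_lt _ _ _ _ h]; exact rel_Z_plus _ _ hp _
  Zm n j h := by rw [NF_even _ _ _ _ h, NF_lt _ _ _ _ h]; exact rel_Z_minus _ _ hp hsum _
  Tm n j h := by rw [NF_even _ _ _ _ h, NF_lt _ _ _ _ h]; exact rel_T_minus _ _ _
  Tp n j h := by rw [NF_odd _ _ _ _ h, NF_lt _ _ _ _ h]; exact rel_T_plus _ _ hp hsum _
  Hc n j h := by rw [NF_odd _ _ _ _ h, NF_even _ _ _ _ h, NF_lt _ _ _ _ h]; exact rel_H _ _ hsum _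
  Hl n j h := by rw [NF_lt _ _ _ _ h]; exact rel_H_le _ _ hp hsum _
  HZ n j h := by simp only [NF_lt _ _ _ _ h]; exact rel_HZ _ _ hp _
  HN n j h := by
    rw [NF_lt _ _ _ _ h]
    exact Finset.sum_nonneg fun _ _ => phiH_nonneg (prUY_nonneg n p hp _ _ _ _)
      (prUY_nonneg n p hp _ _ _ _)
  HT n j h := by simp only [NF_lt _ _ _ _ h]; exact rel_H_ge _ _ hp hsum _

lemma entXY_eq (p : ZMod 2 × Y → ℝ) (hp : ∀ z, 0 ≤ p z) :
    NF phiH p 0 0 / Real.log 2 = entXY p := by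
  have hs : ∀ f : ZMod 2 → ℝ, ∑ v, f v = f 0 + f 1 := fun f => Fin.sum_univ_two f
  rw [NF_lt _ _ _ _ (by norm_num), Fn_zero]
  unfold entXY
  rw [hs]
  simp only [hs]
  rw [← Finset.sum_add_distrib, ← Finset.sum_neg_distrib, Finset.sum_div]
  refine Finset.sum_congr rfl fun y _ => ?_
  rw [phiH_eq (hp _) (hp _)]
  unfold Real.logb
  ring

open Classical in
lemma frac_card (n : ℕ) (P : ℕ → Prop) (Q : Fin (2 ^ n) → Prop)
    (hPQ : ∀ j : Fin (2 ^ n), P j.val ↔ Q j) :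
    frac n P = ((Finset.univ.filter Q).card : ℝ) / (2 ^ n : ℕ) := by
  unfold frac
  rw [Finset.sum_range, Finset.card_filter]
  push_cast
  congr 1
  exact Finset.sum_congr rfl fun j _ => by simp only [hPQ]

lemma cond_main (p : ZMod 2 × Y → ℝ) (hp : ∀ z, 0 ≤ p z) (hsum : ∑ z, p z = 1) (β : ℝ)
    (hβ : 0 < β ∧ β < 1 / 2) :
    Tendsto (fun n => ((HXYset n p β).card : ℝ) / (2 ^ n : ℕ)) atTop (nhds (entXY p))
    ∧ Tendsto (fun n => ((LXYset n p β).card : ℝ) / (2 ^ n : ℕ)) atTop (nhds (1 - entXY p)) := by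
  have hm := (NF_Pol p hp hsum).main β hβ
  rw [entXY_eq p hp] at hm
  have e : ∀ n (j : Fin (2 ^ n)), NF phiZ p n j.val = Zcond n p j := by
    intro n j
    rw [NF_lt _ _ _ _ j.isLt, Zcond_eq]
  refine ⟨hm.1.congr fun n => ?_, hm.2.congr fun n => ?_⟩
  · exact frac_card n _ _ fun j => by rw [e]
  · exact frac_card n _ _ fun j => by rw [e]

lemma Zsrc_eq (n : ℕ) (pm : ZMod 2 → ℝ) (j : Fin (2 ^ n)) :
    Zsrc n pm j = Zcond n (fun z : ZMod 2 × Unit => pm z.1) j := by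
  unfold Zsrc Zcond
  congr 1
  refine Finset.sum_congr rfl fun r _ => ?_
  rw [Fintype.sum_unique]
  rfl

end aux

/-- polarization set sizes: with `β ∈ (0,1/2)` and `δ_N = 2^{-N^β}`,
`|ℋ_X|/N → H(X)`, `|ℒ_X|/N → 1 − H(X)`, `|ℋ_{X|Y}|/N → H(X|Y)` and
`|ℒ_{X|Y}|/N → 1 − H(X|Y)` as `N = 2^n → ∞`. -/
theorem polarization_set_sizes {Y : Type*} [Fintype Y] (p : ZMod 2 × Y → ℝ)
    (hp : ∀ z, 0 ≤ p z) (hsum : ∑ z, p z = 1) (β : ℝ) (hβ : 0 < β ∧ β < 1 / 2) :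
    Tendsto (fun n => ((HXset n (pmX p) β).card : ℝ) / (2 ^ n : ℕ)) atTop (nhds (entX p))
    ∧ Tendsto (fun n => ((LXset n (pmX p) β).card : ℝ) / (2 ^ n : ℕ)) atTop (nhds (1 - entX p))
    ∧ Tendsto (fun n => ((HXYset n p β).card : ℝ) / (2 ^ n : ℕ)) atTop (nhds (entXY p))
    ∧ Tendsto (fun n => ((LXYset n p β).card : ℝ) / (2 ^ n : ℕ)) atTop (nhds (1 - entXY p)) := by
  have hpm : ∀ x, 0 ≤ pmX p x := fun x => Finset.sum_nonneg fun _ _ => hp _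
  have hpm1 : ∑ x, pmX p x = 1 := by rw [← hsum, Fintype.sum_prod_type]; rfl
  have hs := cond_main (fun z : ZMod 2 × Unit => pmX p z.1) (fun z => hpm z.1)
    (by rw [Fintype.sum_prod_type]; simpa using hpm1) β hβ
  have he : entXY (fun z : ZMod 2 × Unit => pmX p z.1) = entX p := by
    unfold entXY entX
    simp [hpm1]
  have h1 : ∀ n, HXset n (pmX p) β = HXYset n (fun z : ZMod 2 × Unit => pmX p z.1) β := by
    intro n
    unfold HXset HXYset
    simp only [Zsrc_eq]
  have h2 : ∀ n, LXset n (pmX p) β = LXYset n (fun z : ZMod 2 × Unit => pmX p z.1) β := by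
    intro n
    unfold LXset LXYset
    simp only [Zsrc_eq]
  rw [he] at hs
  simp only [h1, h2]
  exact ⟨hs.1, hs.2, cond_main p hp hsum β hβ⟩

end PolarSrc
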